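/- arXiv:1904.01925 — 6 statements merged into one kernel-verified Lean document; each statement's English description precedes it below -/
import Mathlib

section
/- Let n, s, t be natural numbers with 1 ≤ s ≤ t ≤ n, and assume t ≥ 2s and s ≥ n − t. Then the number of monochromatic Schur triples on [n] under the block coloring R^s B^{t−s} R^{n−t} is exactly M(n,s,t) = s(s−1)/2 + (t−2s)(t−2s−1)/2 + (n−t)(n−t−1). -/
/-- The number of monochromatic Schur triples `(x, y, z) ∈ [n]³` with `x + y = z`
under the block coloring `R^s B^(t-s) R^(n-t)` of `[n] = {1, …, n}`
(an integer `i ∈ [n]` is red iff `i ≤ s` or `t < i`, blue otherwise). -/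
def mstCount (n s t : ℕ) : ℕ :=
  ((Finset.Icc 1 n ×ˢ Finset.Icc 1 n ×ˢ Finset.Icc 1 n).filter
    (fun p => p.1 + p.2.1 = p.2.2 ∧
      (((p.1 ≤ s ∨ t < p.1) ∧ (p.2.1 ≤ s ∨ t < p.2.1) ∧ (p.2.2 ≤ s ∨ t < p.2.2)) ∨
       ((s < p.1 ∧ p.1 ≤ t) ∧ (s < p.2.1 ∧ p.2.1 ≤ t) ∧ (s < p.2.2 ∧ p.2.2 ≤ t))))).card

/-!
Call `{(x, y, x + y) : a < x, b < y, x + y ≤ N}` a triangle; it has `(N - a - b).choose 2` elements.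
The blue triples form the triangle with `(a, b, N) = (s, s, t)`. A red triple with `z ≤ s` lies in
the triangle `(0, 0, s)`. If instead `z > t`, then `t ≥ 2s` forbids `x, y ≤ s`, while `n ≤ s + t`
forbids `x, y > t`, so exactly one summand exceeds `t`. The other one is then at most `n - t ≤ s`,
hence automatically red, which leaves the triangles `(t, 0, n)` and `(0, t, n)`.
-/

open Finset

/-- The ordered Schur triples `(x, y, x + y)` all of whose entries lie in `A`. -/
def schurTriples (A : Finset ℕ) : Finset (ℕ × ℕ × ℕ) :=
  {p ∈ A ×ˢ A ×ˢ A | p.1 + p.2.1 = p.2.2}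

/-- The ordered Schur triples `(x, y, x + y)` with `a < x`, `b < y` and `x + y ≤ N`: the lattice
points of a right triangle, out of which the monochromatic triples are assembled. The bounds on
`x` and `y` imposed by `range` follow from `x + y ≤ N`. -/
def schurTriangle (a b N : ℕ) : Finset (ℕ × ℕ × ℕ) :=
  {p ∈ range (N + 1) ×ˢ range (N + 1) ×ˢ range (N + 1) |
    a < p.1 ∧ b < p.2.1 ∧ p.1 + p.2.1 = p.2.2}

theorem mem_schurTriples {A : Finset ℕ} {x y z : ℕ} :
    (x, y, z) ∈ schurTriples A ↔ (x ∈ A ∧ y ∈ A ∧ z ∈ A) ∧ x + y = z := by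
  simp only [schurTriples, mem_filter, mem_product]

theorem mem_schurTriangle {a b N x y z : ℕ} :
    (x, y, z) ∈ schurTriangle a b N ↔ a < x ∧ b < y ∧ x + y = z ∧ z ≤ N := by
  simp only [schurTriangle, mem_filter, mem_product, mem_range]
  omega

theorem card_schurTriangle (a b N : ℕ) : #(schurTriangle a b N) = (N - a - b).choose 2 := by
  -- Slice by the sum: there are `k` triples with `z = a + b + 1 + k`.
  have card_eq_card_sigma :
      #(schurTriangle a b N) = #((range (N - a - b)).sigma fun k ↦ range k) := by
    refine card_nbij' (fun p ↦ ⟨p.2.2 - (a + b + 1), p.1 - (a + 1)⟩)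
      (fun q ↦ (a + 1 + q.2, b + (q.1 - q.2), a + b + 1 + q.1)) ?_ ?_ ?_ ?_
    · rintro ⟨x, y, z⟩ h
      simp only [mem_coe, mem_schurTriangle, mem_sigma, mem_range] at h ⊢
      omega
    · rintro ⟨k, i⟩ h
      simp only [mem_coe, mem_schurTriangle, mem_sigma, mem_range] at h ⊢
      omega
    · rintro ⟨x, y, z⟩ h
      simp only [mem_coe, mem_schurTriangle, Prod.mk.injEq] at h ⊢
      omega
    · rintro ⟨k, i⟩ -
      simp only [Nat.add_sub_cancel_left]
  rw [card_eq_card_sigma, card_sigma, Nat.choose_two_right, ← sum_range_id]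
  simp only [card_range]

theorem schurTriples_Ioc (s t : ℕ) : schurTriples (Ioc s t) = schurTriangle s s t := by
  ext ⟨x, y, z⟩
  simp only [mem_schurTriples, mem_schurTriangle, mem_Ioc]
  omega

theorem card_schurTriples_Ioc (s t : ℕ) : #(schurTriples (Ioc s t)) = (t - 2 * s).choose 2 := by
  rw [schurTriples_Ioc, card_schurTriangle, Nat.sub_sub, two_mul]

theorem schurTriples_Ioc_union_Ioc {n s t : ℕ} (h2s : 2 * s ≤ t) (hnt : n ≤ s + t) :
    schurTriples (Ioc 0 s ∪ Ioc t n) =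
      schurTriples (Ioc 0 s) ∪ (schurTriangle t 0 n ∪ schurTriangle 0 t n) := by
  ext ⟨x, y, z⟩
  simp only [mem_union, mem_schurTriples, mem_schurTriangle, mem_Ioc]
  omega

theorem card_schurTriples_Ioc_union_Ioc {n s t : ℕ} (h2s : 2 * s ≤ t) (hnt : n ≤ s + t) :
    #(schurTriples (Ioc 0 s ∪ Ioc t n)) = s.choose 2 + 2 * (n - t).choose 2 := by
  have disjoint_triangles : Disjoint (schurTriangle t 0 n) (schurTriangle 0 t n) := by
    rw [disjoint_left]
    rintro ⟨x, y, z⟩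
    simp only [mem_schurTriangle]
    omega
  have disjoint_small : Disjoint (schurTriples (Ioc 0 s))
      (schurTriangle t 0 n ∪ schurTriangle 0 t n) := by
    rw [disjoint_left]
    rintro ⟨x, y, z⟩
    simp only [mem_union, mem_schurTriples, mem_schurTriangle, mem_Ioc]
    omega
  rw [schurTriples_Ioc_union_Ioc h2s hnt, card_union_of_disjoint disjoint_small,
    card_union_of_disjoint disjoint_triangles, card_schurTriples_Ioc, card_schurTriangle,
    card_schurTriangle, mul_zero, Nat.sub_zero, Nat.sub_zero, Nat.sub_zero, ← two_mul]

theorem mstCount_eq_card_red_add_card_blue {n s t : ℕ} (hst : s ≤ t) (htn : t ≤ n) :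
    mstCount n s t =
      #(schurTriples (Ioc 0 s ∪ Ioc t n)) + #(schurTriples (Ioc s t)) := by
  have disjoint_red_blue :
      Disjoint (schurTriples (Ioc 0 s ∪ Ioc t n)) (schurTriples (Ioc s t)) := by
    rw [disjoint_left]
    rintro ⟨x, y, z⟩
    simp only [mem_schurTriples, mem_union, mem_Ioc]
    omega
  rw [← card_union_of_disjoint disjoint_red_blue, mstCount]
  congr 1
  ext ⟨x, y, z⟩
  simp only [mem_filter, mem_product, mem_Icc, mem_union, mem_schurTriples, mem_Ioc]
  omega

theorem exact_count_block_coloring (n s t : ℕ) (hs : 1 ≤ s) (hst : s ≤ t) (htn : t ≤ n)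
    (h2s : 2 * s ≤ t) (hnt : n - t ≤ s) :
    mstCount n s t =
      s * (s - 1) / 2 + (t - 2 * s) * (t - 2 * s - 1) / 2 + (n - t) * (n - t - 1) := by
  have two_mul_choose_two : 2 * (n - t).choose 2 = (n - t) * (n - t - 1) := by
    rw [Nat.choose_two_right, Nat.mul_div_cancel' (Nat.even_mul_pred_self _).two_dvd]
  calc
    mstCount n s t = #(schurTriples (Ioc 0 s ∪ Ioc t n)) + #(schurTriples (Ioc s t)) :=
      mstCount_eq_card_red_add_card_blue hst htn
    _ = s.choose 2 + 2 * (n - t).choose 2 + (t - 2 * s).choose 2 := by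
      rw [card_schurTriples_Ioc_union_Ioc h2s (Nat.sub_le_iff_le_add.mp hnt),
        card_schurTriples_Ioc]
    _ = _ := by
      rw [two_mul_choose_two, Nat.choose_two_right, Nat.choose_two_right, add_right_comm]
end

section
/- The polynomial p(i,j) = 5i + 5i² − 3j − 4ij + 3j² is nonnegative for all integer lattice points (i,j) ∈ ℤ². -/
/-- The polynomial `p(i,j) = 5i + 5i² − 3j − 4ij + 3j²` is nonnegative at all
integer lattice points `(i,j) ∈ ℤ²`. -/
theorem quadratic_nonneg_on_lattice (i j : ℤ) :
    0 ≤ 5 * i + 5 * i ^ 2 - 3 * j - 4 * i * j + 3 * j ^ 2 := by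
  have hi : 0 ≤ (-i) ^ 2 - -i := sub_nonneg.mpr (Int.le_self_sq (-i))
  have hj : 0 ≤ j ^ 2 - j := sub_nonneg.mpr (Int.le_self_sq j)
  have hji : 0 ≤ (j - i) ^ 2 - (j - i) := sub_nonneg.mpr (Int.le_self_sq (j - i))
  calc
    0 ≤ 3 * ((-i) ^ 2 - -i) + (j ^ 2 - j) + 2 * ((j - i) ^ 2 - (j - i)) := by positivity
    _ = 5 * i + 5 * i ^ 2 - 3 * j - 4 * i * j + 3 * j ^ 2 := by ring
end

section
/- For every n ∈ ℕ with n ≥ 1, the minimal number of monochromatic Schur triples that can be attained under any 2-coloring of [n] is M(n) = ⌊(n² − 4n + 6)/11⌋; that is, every 2-coloring χ of [n] admits at least ⌊(n² − 4n + 6)/11⌋ monochromatic Schur triples, and there exists a 2-coloring attaining exactly this number. -/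
/-- The number of monochromatic Schur triples `(x, y, z) ∈ [n]³` with `x + y = z`
under the 2-coloring `χ` of `[n] = {1, …, n}` (colors encoded as `Bool`). -/
def mstCountChi (n : ℕ) (χ : ℕ → Bool) : ℕ :=
  ((Finset.Icc 1 n ×ˢ Finset.Icc 1 n ×ˢ Finset.Icc 1 n).filter
    (fun p => p.1 + p.2.1 = p.2.2 ∧ χ p.1 = χ p.2.1 ∧ χ p.2.1 = χ p.2.2)).card

/-!
Encode the colors as signs `s i = ±1` with partial sums `F`. Three signs `x, y, z` are equal iff
`1 + x y + x z + y z = 4`, and this expression vanishes otherwise, so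
`8 M(n, χ) = n² - 3 n + 2 (F(n)² + ∑_{x + y ≤ n} s x s y)`.

For the lower bound, cut `n = a + b` in half. The hyperbola method rewrites the double sum as
`F a F b + ∑_{j < a} F j s' j + ∑_{j < b} F j s' j` with `s'` the reversed signs. Since
`∑_{j < b} s' j = F n - F a`, we may subtract a constant `k` from `F` at the price of a term linear
in `F n`, and then estimate `(F j - k) s' j ≥ -|F j - k|`. Completing the square in `F n` leaves
a statement about the walk `F` on `[0, b]` alone: `∑_{j < a} |F j - k| + ∑_{j < b} |F j - k|` minus
`(F a - k) (F b - k)` is small for a suitable `k`. If the walk up to time `a` has a late zero,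
`k = 0` works; otherwise `k = ⌊(n + 2) / 11⌋` does.

The bound is attained by three blocks of alternating colors with lengths close to
`4 n / 11`, `6 n / 11` and `n / 11`.
-/

namespace SchurTriples

open Finset

/-! ### Unit walks -/

/-- A unit walk: an integer sequence whose consecutive terms differ by exactly one. Partial sums of
signs have this form. -/
def IsUnitWalk (F : ℕ → ℤ) : Prop :=
  ∀ j, F (j + 1) = F j + 1 ∨ F (j + 1) = F j - 1

namespace IsUnitWalk

variable {F G : ℕ → ℤ}

theorem neg (hF : IsUnitWalk F) : IsUnitWalk fun j ↦ -F j := fun j ↦ by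
  have := hF j
  dsimp only
  omega

theorem sub_const (hF : IsUnitWalk F) (k : ℤ) : IsUnitWalk fun j ↦ F j - k := fun j ↦ by
  have := hF j
  dsimp only
  omega

theorem shift (hF : IsUnitWalk F) (t : ℕ) : IsUnitWalk fun j ↦ F (t + j) := fun j ↦ hF (t + j)

theorem apply_add_le (hF : IsUnitWalk F) (a d : ℕ) : F (a + d) ≤ F a + d := by
  induction d with
  | zero => simp
  | succ d ih =>
    have := hF (a + d)
    rw [← add_assoc]
    push_cast
    omega

theorem abs_apply_le (hG : IsUnitWalk G) (h0 : G 0 = 0) (l : ℕ) : |G l| ≤ l := by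
  have upper := hG.apply_add_le 0 l
  have lower := hG.neg.apply_add_le 0 l
  simp only [zero_add, h0, neg_zero] at upper lower
  exact abs_le'.2 ⟨upper, lower⟩

theorem abs_apply_succ (hG : IsUnitWalk G) (j : ℕ) :
    |G (j + 1)| = |G j| + 1 ∨ |G (j + 1)| = |G j| - 1 := by
  have := hG j
  grind

theorem exists_last_eq (hF : IsUnitWalk F) {v : ℤ} (h0 : F 0 ≤ v) {m : ℕ} (hm : v ≤ F m) :
    ∃ t ≤ m, F t = v ∧ ∀ j, t ≤ j → j ≤ m → v ≤ F j := by
  induction m with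
  | zero => exact ⟨0, le_rfl, by omega, fun j _ hj ↦ by rwa [Nat.le_zero.1 hj]⟩
  | succ m ih =>
    by_cases hv : F (m + 1) = v
    · refine ⟨m + 1, le_rfl, hv, fun j hj hj' ↦ ?_⟩
      rw [le_antisymm hj' hj, hv]
    · have := hF m
      obtain ⟨t, htm, ht, hafter⟩ := ih (by omega)
      refine ⟨t, by omega, ht, fun j hj hj' ↦ ?_⟩
      obtain hjm | rfl : j ≤ m ∨ j = m + 1 := by omega
      · exact hafter j hj hjm
      · exact hm

theorem forall_lt_or_exists_first_eq (hF : IsUnitWalk F) {v : ℤ} (h0 : F 0 ≤ v) (m : ℕ) :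
    (∀ j ≤ m, F j < v) ∨ ∃ u ≤ m, F u = v ∧ ∀ j < u, F j < v := by
  induction m with
  | zero =>
    rcases h0.lt_or_eq with hlt | heq
    · exact .inl fun j hj ↦ by rwa [Nat.le_zero.1 hj]
    · exact .inr ⟨0, le_rfl, heq, by simp⟩
  | succ m ih =>
    rcases ih with hlt | ⟨u, hum, hu, hbefore⟩
    · have := hF m
      have := hlt m le_rfl
      by_cases hv : F (m + 1) = v
      · exact .inr ⟨m + 1, le_rfl, hv, fun j hj ↦ hlt j (by omega)⟩
      · refine .inl fun j hj ↦ ?_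
        obtain hjm | rfl : j ≤ m ∨ j = m + 1 := by omega
        · exact hlt j hjm
        · omega
    · exact .inr ⟨u, by omega, hu, hbefore⟩

theorem four_mul_sum_abs_le (hG : IsUnitWalk G) (h0 : G 0 = 0) (l : ℕ) :
    4 * ∑ j ∈ range l, |G j| ≤ (l + |G l|) ^ 2 - 2 * |G l| * (|G l| + 1) := by
  induction l with
  | zero => simp [h0]
  | succ l ih =>
    have hle := hG.abs_apply_le h0 l
    rw [sum_range_succ]
    push_cast
    rcases hG.abs_apply_succ l with h | h <;> rw [h] <;> nlinarith

theorem four_mul_sum_abs_sub_le_of_eq_zero (hF : IsUnitWalk F) (h0 : F 0 = 0) {t : ℕ}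
    (ht : F t = 0) (k : ℕ) : 4 * ∑ j ∈ range t, |F j - k| ≤ t ^ 2 + 4 * k * t := by
  have area := hF.four_mul_sum_abs_le h0 t
  have triangle_ineq : ∑ j ∈ range t, |F j - k| ≤ ∑ j ∈ range t, (|F j| + k) :=
    sum_le_sum fun j _ ↦ by simpa using abs_sub (F j) k
  simp only [sum_add_distrib, sum_const, card_range, nsmul_eq_mul] at triangle_ineq
  simp only [ht, abs_zero] at area
  linarith

end IsUnitWalk

theorem two_mul_sum_range_sub (k : ℕ) : 2 * ∑ i ∈ range k, ((k : ℤ) - i) = k * (k + 1) := by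
  induction k with
  | zero => simp
  | succ k ih =>
    rw [sum_range_succ']
    simp only [Nat.cast_succ, add_sub_add_right_eq_sub, mul_add, ih]
    push_cast
    ring

theorem IsUnitWalk.two_mul_sum_abs_sub_le_of_first_eq {G : ℕ → ℤ} (hG : IsUnitWalk G)
    (h0 : G 0 = 0) {k u : ℕ} (hu : G u = k) (hnonneg : ∀ j < u, 0 ≤ G j) (hle : ∀ j < u, G j ≤ k) :
    2 * ∑ j ∈ range u, |G j - k| ≤ 2 * k * u - k * (k - 1) := by
  have hku : k ≤ u := by
    have := hG.apply_add_le 0 u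
    simp only [zero_add, h0, hu] at this
    omega
  obtain ⟨w, rfl⟩ := Nat.exists_eq_add_of_le' hku
  have abs_eq : ∀ j < w + k, |G j - k| = k - G j := fun j hj ↦ by
    rw [abs_sub_comm, abs_of_nonneg (sub_nonneg.2 (hle j hj))]
  have early : ∑ j ∈ range w, |G j - k| ≤ w * k := by
    have := sum_le_card_nsmul (range w) (fun j ↦ |G j - k|) k fun j hj ↦ by
      have hj' : j < w + k := by have := mem_range.1 hj; omega
      have := hnonneg j hj'
      rw [abs_eq j hj']
      omega
    simpa using this
  have late : ∑ i ∈ range k, |G (w + i) - k| ≤ ∑ i ∈ range k, ((k : ℤ) - i) :=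
    sum_le_sum fun i hi ↦ by
      rw [mem_range] at hi
      have climb := hG.apply_add_le (w + i) (k - i)
      rw [show w + i + (k - i) = w + k by omega, hu] at climb
      rw [abs_eq _ (by omega)]
      omega
  have := two_mul_sum_range_sub k
  rw [sum_range_add]
  push_cast
  linarith

/-! ### The deviation of a walk -/

/-- The quantity `∑_{j < a} |G j| + ∑_{j < b} |G j| - G a * G b`. For `G = F - k`, where `F` is the
walk of partial sums of the color signs of `[a + b]`, it controls from above the deficit of
monochromatic triples. -/
def deviation (G : ℕ → ℤ) (a b : ℕ) : ℤ :=
  ∑ j ∈ range a, |G j| + ∑ j ∈ range b, |G j| - G a * G b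

theorem deviation_neg (G : ℕ → ℤ) (a b : ℕ) : deviation (fun j ↦ -G j) a b = deviation G a b := by
  simp [deviation]

theorem deviation_add_add (G : ℕ → ℤ) (t p q : ℕ) :
    deviation G (t + p) (t + q) =
      2 * ∑ j ∈ range t, |G j| + deviation (fun j ↦ G (t + j)) p q := by
  simp only [deviation, sum_range_add]
  ring

namespace IsUnitWalk

variable {F G : ℕ → ℤ} {a b k t : ℕ}

theorem six_mul_deviation_le (hG : IsUnitWalk G) (h0 : G 0 = 0) {p q : ℕ} (hpq : p ≤ q)
    (hqp : q ≤ p + 1) : 6 * deviation G p q ≤ ((p + q : ℕ) : ℤ) ^ 2 - (p + q : ℕ) + 1 := by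
  have area := hG.four_mul_sum_abs_le h0 p
  have sq_eq : |G p| ^ 2 = G p ^ 2 := sq_abs (G p)
  unfold deviation
  obtain rfl | rfl : q = p ∨ q = p + 1 := by omega
  · push_cast
    nlinarith [sq_nonneg (q - 3 * |G q| - 1)]
  · have product : |G p| ^ 2 - |G p| ≤ G p * G (p + 1) := by
      rcases hG p with h | h <;> rw [h] <;> linarith [le_abs_self (G p), neg_abs_le (G p)]
    rw [sum_range_succ]
    push_cast
    nlinarith [sq_nonneg (p - 3 * |G p| + 1)]

theorem six_mul_deviation_le_of_eq_zero (hF : IsUnitWalk F) (h0 : F 0 = 0) (ht : F t = 0)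
    (hta : t ≤ a) (hab : a ≤ b) (hba : b ≤ a + 1) :
    6 * deviation F a b ≤
      3 * t ^ 2 + (((a + b : ℕ) - 2 * t : ℤ) ^ 2 - ((a + b : ℕ) - 2 * t : ℤ) + 1) := by
  obtain ⟨p, rfl⟩ := Nat.exists_eq_add_of_le hta
  obtain ⟨q, rfl⟩ := Nat.exists_eq_add_of_le (hta.trans hab)
  have before := hF.four_mul_sum_abs_sub_le_of_eq_zero h0 ht 0
  have after := (hF.shift t).six_mul_deviation_le ht (p := p) (q := q) (by omega) (by omega)
  have length : ((t + p + (t + q) : ℕ) : ℤ) - 2 * t = (p + q : ℕ) := by push_cast; ring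
  simp only [Nat.cast_zero, sub_zero] at before
  rw [deviation_add_add, length]
  linarith

theorem six_mul_deviation_sub_le_of_first_eq (hF : IsUnitWalk F) (h0 : F 0 = 0) (ht : F t = 0)
    {u : ℕ} (hu : F (t + u) = k) (hnonneg : ∀ j < u, 0 ≤ F (t + j)) (hle : ∀ j < u, F (t + j) ≤ k)
    (hua : t + u ≤ a) (hab : a ≤ b) (hba : b ≤ a + 1) :
    6 * deviation (fun j ↦ F j - k) a b ≤
      12 * k * (t + u : ℕ) + 3 * t ^ 2 - 6 * k * (k - 1) +
        (((a + b : ℕ) - 2 * (t + u : ℕ) : ℤ) ^ 2 - ((a + b : ℕ) - 2 * (t + u : ℕ) : ℤ) + 1) := by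
  obtain ⟨p, rfl⟩ := Nat.exists_eq_add_of_le hua
  obtain ⟨q, rfl⟩ := Nat.exists_eq_add_of_le (hua.trans hab)
  have before := hF.four_mul_sum_abs_sub_le_of_eq_zero h0 ht k
  have climb := (hF.shift t).two_mul_sum_abs_sub_le_of_first_eq ht hu hnonneg hle
  have after := ((hF.sub_const k).shift (t + u)).six_mul_deviation_le (sub_eq_zero.2 hu)
    (p := p) (q := q) (by omega) (by omega)
  have length : ((t + u + p + (t + u + q) : ℕ) : ℤ) - 2 * (t + u : ℕ) = (p + q : ℕ) := by
    push_cast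
    ring
  rw [deviation_add_add, length, sum_range_add]
  push_cast at before climb after ⊢
  linarith

theorem two_mul_deviation_sub_le_of_forall_lt (hF : IsUnitWalk F) (h0 : F 0 = 0) (ht : F t = 0)
    (hta : t ≤ a) (hnonneg : ∀ j, t ≤ j → j ≤ a → 0 ≤ F j) (hlt : ∀ j, t ≤ j → j ≤ a → F j < k)
    (hab : a ≤ b) (hba : b ≤ a + 1) :
    2 * deviation (fun j ↦ F j - k) a b ≤ t ^ 2 + 2 * k * (a + b : ℕ) := by
  obtain ⟨p, rfl⟩ := Nat.exists_eq_add_of_le hta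
  obtain ⟨q, rfl⟩ := Nat.exists_eq_add_of_le (hta.trans hab)
  have before := hF.four_mul_sum_abs_sub_le_of_eq_zero h0 ht k
  have after : ∀ l ≤ p + 1, ∑ j ∈ range l, |F (t + j) - k| ≤ l * k := fun l hl ↦ by
    have := sum_le_card_nsmul (range l) (fun j ↦ |F (t + j) - k|) k fun j hj ↦ by
      rw [mem_range] at hj
      have := hnonneg (t + j) (by omega) (by omega)
      have := hlt (t + j) (by omega) (by omega)
      exact abs_le.2 ⟨by omega, by omega⟩
    simpa using this
  have product : 0 ≤ (F (t + p) - k) * (F (t + q) - k) := by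
    have hp := hlt (t + p) (by omega) le_rfl
    have hq : F (t + q) ≤ k := by
      obtain rfl | rfl : q = p ∨ q = p + 1 := by omega
      · exact hp.le
      · have := hF (t + p)
        rw [add_assoc] at this
        omega
    exact mul_nonneg_of_nonpos_of_nonpos (by omega) (by omega)
  have after_p := after p (by omega)
  have after_q := after q (by omega)
  rw [deviation_add_add, deviation]
  push_cast
  linarith

end IsUnitWalk

theorem quadratic_bound_of_eq_zero {n t : ℤ} (hnt : n + 3 ≤ 11 * t) (htn : 2 * t ≤ n) :
    11 * (3 * t ^ 2 + ((n - 2 * t) ^ 2 - (n - 2 * t) + 1)) ≤ 3 * (3 * n ^ 2 - n + 32) := by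
  nlinarith [mul_nonneg (sub_nonneg.2 hnt) (sub_nonneg.2 htn), sq_nonneg n]

theorem quadratic_bound_of_forall_lt {n k t : ℤ} (ht : 0 ≤ t) (htk : t ≤ k)
    (hkn : 11 * k ≤ n + 2) :
    11 * (t ^ 2 + 2 * k * n + 4 * k ^ 2) ≤ 3 * n ^ 2 - n + 32 := by
  nlinarith [mul_nonneg ht (sub_nonneg.2 htk), mul_nonneg (ht.trans htk) (sub_nonneg.2 hkn),
    sq_nonneg (n - 6)]

theorem quadratic_bound_of_first_eq {n k t σ : ℤ} (ht : 0 ≤ t) (htk : t ≤ k)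
    (hkn : 11 * k ≤ n + 2) (hnk : n ≤ 11 * k + 8) (htσ : t + k ≤ σ) (hσn : 2 * σ ≤ n) :
    11 * (12 * k * σ + 3 * t ^ 2 - 6 * k * (k - 1) + ((n - 2 * σ) ^ 2 - (n - 2 * σ) + 1) +
      12 * k ^ 2) ≤ 3 * (3 * n ^ 2 - n + 32) := by
  -- The extremal walk has `t = 0` and `σ = k`, so `d` and `t` measure the distance from it.
  obtain ⟨d, rfl⟩ : ∃ d, σ = k + d := ⟨σ - k, by ring⟩
  obtain ⟨ρ, rfl⟩ : ∃ ρ, n = 11 * k - 2 + ρ := ⟨n - 11 * k + 2, by ring⟩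
  have htd : t ≤ d := by linarith
  have hρ : 0 ≤ ρ := by linarith
  have difference_eq : 3 * (3 * (11 * k - 2 + ρ) ^ 2 - (11 * k - 2 + ρ) + 32) -
      11 * (12 * k * (k + d) + 3 * t ^ 2 - 6 * k * (k - 1) +
        ((11 * k - 2 + ρ - 2 * (k + d)) ^ 2 - (11 * k - 2 + ρ - 2 * (k + d)) + 1) + 12 * k ^ 2) =
      2 * (ρ * (10 - ρ)) + (61 - 4 * ρ) + 22 * (d * (11 * k - 2 + ρ - 2 * (k + d))) +
        66 * (d * (k - 1)) + 22 * (d * ρ) - 33 * t ^ 2 := by ring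
  have hρρ : 0 ≤ ρ * (10 - ρ) := mul_nonneg hρ (by linarith)
  have hdσ : 0 ≤ d * (11 * k - 2 + ρ - 2 * (k + d)) := mul_nonneg (by linarith) (by linarith)
  have hdρ : t * ρ ≤ d * ρ := mul_le_mul_of_nonneg_right htd hρ
  obtain rfl | hk : k = 0 ∨ 1 ≤ k := by omega
  · obtain rfl : t = 0 := by omega
    nlinarith
  · have hdk : t * (t - 1) ≤ d * (k - 1) := by nlinarith
    nlinarith

theorem IsUnitWalk.exists_deviation_sub_le_of_nonneg {F : ℕ → ℤ} (hF : IsUnitWalk F)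
    (h0 : F 0 = 0) {a b : ℕ} (hab : a ≤ b) (hba : b ≤ a + 1) (ha : 0 ≤ F a) :
    ∃ k : ℤ, 22 * (deviation (fun j ↦ F j - k) a b + 2 * k ^ 2) ≤
      3 * ((a + b : ℕ) : ℤ) ^ 2 - (a + b : ℕ) + 32 := by
  obtain ⟨t, hta, ht, hafter⟩ := hF.exists_last_eq h0.le ha
  obtain ⟨k, hk⟩ : ∃ k, k = (a + b + 2) / 11 := ⟨_, rfl⟩
  rcases Nat.lt_or_ge k t with hkt | htk
  · refine ⟨0, ?_⟩
    have dev := hF.six_mul_deviation_le_of_eq_zero h0 ht hta hab hba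
    have poly := quadratic_bound_of_eq_zero (n := (a + b : ℕ)) (t := t) (by omega) (by omega)
    simp only [sub_zero]
    linarith
  refine ⟨k, ?_⟩
  rcases (hF.shift t).forall_lt_or_exists_first_eq (v := k) (by simp [ht]) (a - t) with
    hlt | ⟨u, hua, hu, hbefore⟩
  · have dev := hF.two_mul_deviation_sub_le_of_forall_lt h0 ht hta hafter
      (fun j htj hja ↦ by simpa [htj] using hlt (j - t) (by omega)) hab hba
    have poly := quadratic_bound_of_forall_lt (n := (a + b : ℕ)) (k := k) (t := t)
      (by omega) (by omega) (by omega)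
    linarith
  · have hku : (k : ℤ) ≤ u := by
      have := hF.apply_add_le t u
      omega
    have dev := hF.six_mul_deviation_sub_le_of_first_eq h0 ht hu
      (fun j hj ↦ hafter _ (by omega) (by omega)) (fun j hj ↦ (hbefore j hj).le)
      (by omega) hab hba
    have poly := quadratic_bound_of_first_eq (n := (a + b : ℕ)) (k := k) (t := t) (σ := (t + u : ℕ))
      (by omega) (by omega) (by omega) (by omega) (by omega) (by omega)
    linarith

theorem IsUnitWalk.exists_deviation_sub_le {F : ℕ → ℤ} (hF : IsUnitWalk F) (h0 : F 0 = 0)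
    {a b : ℕ} (hab : a ≤ b) (hba : b ≤ a + 1) :
    ∃ k : ℤ, 22 * (deviation (fun j ↦ F j - k) a b + 2 * k ^ 2) ≤
      3 * ((a + b : ℕ) : ℤ) ^ 2 - (a + b : ℕ) + 32 := by
  rcases le_total 0 (F a) with ha | ha
  · exact hF.exists_deviation_sub_le_of_nonneg h0 hab hba ha
  · obtain ⟨k, hk⟩ := hF.neg.exists_deviation_sub_le_of_nonneg (by simp [h0]) hab hba
      (neg_nonneg.2 ha)
    refine ⟨-k, ?_⟩
    have reflect : deviation (fun j ↦ F j - -k) a b = deviation (fun j ↦ -F j - k) a b := by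
      rw [← deviation_neg]
      exact congrArg (deviation · a b) (funext fun j ↦ by ring)
    rwa [reflect, neg_sq]

/-! ### Partial sums and the hyperbola method -/

section PartialSum

variable {M R : Type*} [AddCommMonoid M] [CommSemiring R]

/-- The partial sum `s 0 + ⋯ + s (t - 1)`; for color signs, the excess of one color class over the
other in `[t]`. -/
def partialSum (s : ℕ → M) (t : ℕ) : M :=
  ∑ i ∈ range t, s i

theorem partialSum_zero (s : ℕ → M) : partialSum s 0 = 0 := sum_range_zero s

theorem partialSum_succ (s : ℕ → M) (t : ℕ) : partialSum s (t + 1) = partialSum s t + s t :=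
  sum_range_succ s t

theorem partialSum_add_eq (s : ℕ → M) (a b : ℕ) :
    partialSum s (a + b) = partialSum s a + ∑ j ∈ range b, s (a + b - 1 - j) := by
  rw [partialSum, sum_range_add, ← sum_range_reflect (fun j ↦ s (a + j)) b, partialSum]
  congr 1
  exact sum_congr rfl fun j hj ↦ congrArg s (by have := mem_range.1 hj; omega)

theorem partialSum_sq (s : ℕ → R) (n : ℕ) :
    partialSum s n ^ 2 = 2 * ∑ z ∈ range n, partialSum s z * s z + ∑ z ∈ range n, s z ^ 2 := by
  induction n with
  | zero => simp [partialSum_zero]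
  | succ n ih =>
    rw [partialSum_succ, sum_range_succ, sum_range_succ, add_sq, ih]
    ring

theorem sum_mul_partialSum_reflect (s : ℕ → R) (a b : ℕ) :
    ∑ i ∈ range a, s i * partialSum s (a + b - 1 - i) =
      partialSum s a * partialSum s b + ∑ j ∈ range a, partialSum s j * s (a + b - 1 - j) := by
  induction a generalizing b with
  | zero => simp [partialSum_zero]
  | succ a ih =>
    have key := ih (b + 1)
    rw [show a + (b + 1) = a + 1 + b by omega] at key
    rw [sum_range_succ, sum_range_succ, key, show a + 1 + b - 1 - a = b by omega,
      partialSum_succ, partialSum_succ]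
    ring

theorem sum_mul_partialSum_hyperbola (s : ℕ → R) (a b : ℕ) :
    ∑ i ∈ range (a + b), s i * partialSum s (a + b - 1 - i) =
      partialSum s a * partialSum s b + ∑ j ∈ range a, partialSum s j * s (a + b - 1 - j) +
        ∑ j ∈ range b, partialSum s j * s (a + b - 1 - j) := by
  have upper_half : ∑ i ∈ range b, s (a + i) * partialSum s (a + b - 1 - (a + i)) =
      ∑ j ∈ range b, partialSum s j * s (a + b - 1 - j) := by
    rw [← sum_range_reflect]
    refine sum_congr rfl fun j hj ↦ ?_
    rw [mem_range] at hj
    rw [show a + (b - 1 - j) = a + b - 1 - j by omega,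
      show a + b - 1 - (a + b - 1 - j) = j by omega, mul_comm]
  rw [sum_range_add, sum_mul_partialSum_reflect, upper_half]

end PartialSum

section Sign

variable {s : ℕ → ℤ}

theorem isUnitWalk_partialSum (hs : ∀ i, s i = 1 ∨ s i = -1) : IsUnitWalk (partialSum s) :=
  fun j ↦ by
    rw [partialSum_succ]
    have := hs j
    omega

theorem mul_sum_sub_sum_abs_le (hs : ∀ i, s i = 1 ∨ s i = -1) (F : ℕ → ℤ) (k : ℤ) (A : Finset ℕ)
    (r : ℕ → ℕ) :
    k * ∑ j ∈ A, s (r j) - ∑ j ∈ A, |F j - k| ≤ ∑ j ∈ A, F j * s (r j) := by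
  rw [mul_sum, ← sum_sub_distrib]
  refine sum_le_sum fun j _ ↦ ?_
  rcases hs (r j) with h | h <;> rw [h] <;> linarith [neg_abs_le (F j - k), le_abs_self (F j - k)]

theorem neg_deviation_sub_le (hs : ∀ i, s i = 1 ∨ s i = -1) (a b : ℕ) (k : ℤ) :
    -(deviation (fun j ↦ partialSum s j - k) a b + 2 * k ^ 2) ≤
      partialSum s (a + b) ^ 2 +
        ∑ i ∈ range (a + b), s i * partialSum s (a + b - 1 - i) := by
  have low := mul_sum_sub_sum_abs_le hs (partialSum s) k (range a) (a + b - 1 - ·)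
  have high := mul_sum_sub_sum_abs_le hs (partialSum s) k (range b) (a + b - 1 - ·)
  have sum_low := partialSum_add_eq s b a
  have sum_high := partialSum_add_eq s a b
  rw [add_comm b a] at sum_low
  rw [← sub_eq_iff_eq_add'.2 sum_low] at low
  rw [← sub_eq_iff_eq_add'.2 sum_high] at high
  rw [sum_mul_partialSum_hyperbola, deviation]
  nlinarith [sq_nonneg (partialSum s (a + b) + k)]

theorem le_sq_add_sum_mul_partialSum (hs : ∀ i, s i = 1 ∨ s i = -1) (n : ℕ) :
    -(3 * (n : ℤ) ^ 2 - n + 32) ≤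
      22 * (partialSum s n ^ 2 + ∑ i ∈ range n, s i * partialSum s (n - 1 - i)) := by
  obtain ⟨a, b, hab, hba, rfl⟩ : ∃ a b, a ≤ b ∧ b ≤ a + 1 ∧ n = a + b :=
    ⟨n / 2, n - n / 2, by omega, by omega, by omega⟩
  obtain ⟨k, hk⟩ := (isUnitWalk_partialSum hs).exists_deviation_sub_le (partialSum_zero s) hab hba
  linarith [neg_deviation_sub_le hs a b k]

end Sign

/-! ### Counting triples by pairs -/

/-- The pairs `(i, j)` with `i + j + 2 ≤ r`. They index the Schur triples
`(i + 1, j + 1, i + j + 2)` of `[r]`, the shift by one keeping the partial sums zero-based. -/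
def schurPairs (r : ℕ) : Finset (ℕ × ℕ) :=
  (range r ×ˢ range r).filter fun p ↦ p.1 + p.2 + 2 ≤ r

theorem mem_schurPairs {r : ℕ} {p : ℕ × ℕ} : p ∈ schurPairs r ↔ p.1 + p.2 + 2 ≤ r := by
  simp only [schurPairs, mem_filter, mem_product, mem_range]
  omega

section Sum

variable {M : Type*} [AddCommMonoid M]

theorem sum_schurPairs (n : ℕ) (f : ℕ × ℕ → M) :
    ∑ p ∈ schurPairs n, f p = ∑ i ∈ range n, ∑ j ∈ range (n - 1 - i), f (i, j) :=
  sum_finset_product _ _ _ fun p ↦ by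
    simp only [mem_schurPairs, mem_range]
    omega

theorem sum_schurPairs_swap (n : ℕ) (f : ℕ × ℕ → M) :
    ∑ p ∈ schurPairs n, f p.swap = ∑ p ∈ schurPairs n, f p :=
  sum_equiv (Equiv.prodComm ℕ ℕ)
    (fun p ↦ by simp only [mem_schurPairs, Equiv.prodComm_apply, Prod.fst_swap, Prod.snd_swap,
      add_comm p.1]) fun _ _ ↦ rfl

theorem sum_schurPairs_fst_add (n : ℕ) (f : ℕ → ℕ → M) :
    ∑ p ∈ schurPairs n, f p.1 (p.1 + p.2 + 1) = ∑ z ∈ range n, ∑ i ∈ range z, f i z := by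
  rw [sum_sigma']
  refine sum_nbij' (fun p ↦ ⟨p.1 + p.2 + 1, p.1⟩) (fun q ↦ (q.2, q.1 - q.2 - 1)) ?_ ?_ ?_ ?_ ?_
  · intro p hp
    simp only [mem_schurPairs] at hp
    simp only [mem_sigma, mem_range]
    omega
  · intro q hq
    simp only [mem_sigma, mem_range] at hq
    simp only [mem_schurPairs]
    omega
  · intro p _
    ext <;> dsimp only
    omega
  · rintro ⟨z, i⟩ hq
    simp only [mem_sigma, mem_range] at hq
    simp only [Sigma.mk.injEq, heq_eq_eq, and_true]
    omega
  · intro _ _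
    rfl

end Sum

theorem card_schurPairs (r : ℕ) : #(schurPairs r) = r.choose 2 := by
  have := sum_schurPairs_fst_add r fun _ _ ↦ 1
  simp only [sum_const, smul_eq_mul, mul_one, card_range] at this
  rw [this, sum_range_id, Nat.choose_two_right]

theorem two_mul_cast_choose_two (r : ℕ) : 2 * (r.choose 2 : ℤ) = r * (r - 1) := by
  induction r with
  | zero => simp
  | succ r ih =>
    rw [Nat.choose_succ_succ', Nat.choose_one_right]
    push_cast
    linarith

theorem mstCountChi_eq_card_filter_schurPairs (n : ℕ) (χ : ℕ → Bool) :
    mstCountChi n χ = #{p ∈ schurPairs n |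
      χ (p.1 + 1) = χ (p.2 + 1) ∧ χ (p.2 + 1) = χ (p.1 + p.2 + 2)} := by
  refine card_nbij' (fun p ↦ (p.1 - 1, p.2.1 - 1)) (fun q ↦ (q.1 + 1, q.2 + 1, q.1 + q.2 + 2))
    ?_ ?_ ?_ ?_
  · rintro ⟨x, y, z⟩ h
    simp only [coe_filter, mem_product, mem_Icc, Set.mem_ofPred_eq, mem_schurPairs] at h ⊢
    obtain ⟨⟨hx, hy, hz⟩, hsum, hmono⟩ := h
    rw [show x - 1 + 1 = x by omega, show y - 1 + 1 = y by omega,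
      show x - 1 + (y - 1) + 2 = z by omega]
    exact ⟨by omega, hmono⟩
  · rintro ⟨i, j⟩ h
    simp only [coe_filter, mem_product, mem_Icc, Set.mem_ofPred_eq, mem_schurPairs] at h ⊢
    exact ⟨by omega, by omega, h.2⟩
  · rintro ⟨x, y, z⟩ h
    simp only [coe_filter, mem_product, mem_Icc, Set.mem_ofPred_eq] at h
    simp only [Prod.mk.injEq]
    omega
  · intro _ _
    rfl

/-! ### The lower bound -/

/-- The color of `i + 1` as a sign. -/
def colorSign (χ : ℕ → Bool) (i : ℕ) : ℤ :=
  if χ (i + 1) then 1 else -1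

theorem colorSign_eq_or (χ : ℕ → Bool) (i : ℕ) : colorSign χ i = 1 ∨ colorSign χ i = -1 := by
  unfold colorSign
  split_ifs <;> simp

theorem four_mul_mstCountChi_eq_sum (n : ℕ) (χ : ℕ → Bool) :
    4 * (mstCountChi n χ : ℤ) = ∑ p ∈ schurPairs n,
      (1 + colorSign χ p.1 * colorSign χ p.2 + colorSign χ p.1 * colorSign χ (p.1 + p.2 + 1) +
        colorSign χ p.2 * colorSign χ (p.1 + p.2 + 1)) := by
  rw [mstCountChi_eq_card_filter_schurPairs, card_filter, Nat.cast_sum, mul_sum]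
  refine sum_congr rfl fun p _ ↦ ?_
  unfold colorSign
  cases χ (p.1 + 1) <;> cases χ (p.2 + 1) <;> cases χ (p.1 + p.2 + 2) <;> simp

theorem two_mul_sum_schurPairs_mul {s : ℕ → ℤ} (hs : ∀ i, s i = 1 ∨ s i = -1) (n : ℕ) :
    2 * ∑ p ∈ schurPairs n, s p.1 * s (p.1 + p.2 + 1) = partialSum s n ^ 2 - n := by
  have sq_sum : ∑ z ∈ range n, s z ^ 2 = n := by
    have sq_one : ∀ z, s z ^ 2 = 1 := fun z ↦ sq_eq_one_iff.2 (hs z)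
    simp [sq_one]
  rw [sum_schurPairs_fst_add n fun i z ↦ s i * s z, partialSum_sq, sq_sum, add_sub_cancel_right]
  simp only [partialSum, sum_mul]

theorem eight_mul_mstCountChi (n : ℕ) (χ : ℕ → Bool) :
    8 * (mstCountChi n χ : ℤ) = (n : ℤ) ^ 2 - 3 * n + 2 * (partialSum (colorSign χ) n ^ 2 +
      ∑ i ∈ range n, colorSign χ i * partialSum (colorSign χ) (n - 1 - i)) := by
  have pairs : 2 * ∑ _p ∈ schurPairs n, (1 : ℤ) = n * (n - 1) := by
    rw [sum_const, card_schurPairs, nsmul_one, two_mul_cast_choose_two]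
  have legs : ∑ p ∈ schurPairs n, colorSign χ p.1 * colorSign χ p.2 =
      ∑ i ∈ range n, colorSign χ i * partialSum (colorSign χ) (n - 1 - i) := by
    simp only [sum_schurPairs, partialSum, mul_sum]
  have first_leg := two_mul_sum_schurPairs_mul (colorSign_eq_or χ) n
  have second_leg : ∑ p ∈ schurPairs n, colorSign χ p.2 * colorSign χ (p.1 + p.2 + 1) =
      ∑ p ∈ schurPairs n, colorSign χ p.1 * colorSign χ (p.1 + p.2 + 1) := by
    rw [← sum_schurPairs_swap]
    simp only [Prod.fst_swap, Prod.snd_swap, add_comm]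
  have expand := four_mul_mstCountChi_eq_sum n χ
  simp only [sum_add_distrib, second_leg, legs] at expand
  linarith

theorem le_eleven_mul_mstCountChi (n : ℕ) (χ : ℕ → Bool) :
    (n : ℤ) ^ 2 - 4 * n - 4 ≤ 11 * (mstCountChi n χ : ℤ) := by
  linarith [eight_mul_mstCountChi n χ, le_sq_add_sum_mul_partialSum (colorSign_eq_or χ) n]

/-! ### The extremal colorings -/

theorem card_le_choose_two_of_le {T : Finset (ℕ × ℕ)} {r u v : ℕ}
    (hT : ∀ p ∈ T, u ≤ p.1 ∧ v ≤ p.2 ∧ p.1 + p.2 + 2 ≤ r + u + v) : #T ≤ r.choose 2 := by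
  rw [← card_schurPairs]
  refine card_le_card_of_injOn (fun p ↦ (p.1 - u, p.2 - v)) (fun p hp ↦ ?_) fun p hp q hq hpq ↦ ?_
  · have := hT p hp
    simp only [mem_coe, mem_schurPairs]
    omega
  · have := hT p hp
    have := hT q hq
    simp only [Prod.mk.injEq] at hpq
    ext <;> omega

/-- The coloring of `{1, 2, …}` whose `true` class is the interval `(a, b]`. -/
def blockColoring (a b x : ℕ) : Bool :=
  decide (a < x ∧ x ≤ b)

theorem mstCountChi_blockColoring_le (a e d : ℕ) :
    mstCountChi (2 * a + e + d) (blockColoring a (2 * a + e)) ≤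
      a.choose 2 + e.choose 2 + (d.choose 2 + d.choose 2) := by
  let c := blockColoring a (2 * a + e)
  let T := {p ∈ schurPairs (2 * a + e + d) |
    c (p.1 + 1) = c (p.2 + 1) ∧ c (p.2 + 1) = c (p.1 + p.2 + 2)}
  have mem_T : ∀ p ∈ T, p.1 + p.2 + 2 ≤ 2 * a + e + d ∧
      (a < p.1 + 1 ∧ p.1 + 1 ≤ 2 * a + e ↔ a < p.2 + 1 ∧ p.2 + 1 ≤ 2 * a + e) ∧
      (a < p.2 + 1 ∧ p.2 + 1 ≤ 2 * a + e ↔ a < p.1 + p.2 + 2 ∧ p.1 + p.2 + 2 ≤ 2 * a + e) :=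
    fun p hp ↦ by
      simpa only [T, c, mem_filter, mem_schurPairs, blockColoring, decide_eq_decide] using hp
  have cover : T ⊆ ({p ∈ T | p.1 + p.2 + 2 ≤ a} ∪ {p ∈ T | a ≤ p.1 ∧ p.1 < 2 * a + e}) ∪
      ({p ∈ T | 2 * a + e ≤ p.1} ∪ {p ∈ T | 2 * a + e ≤ p.2}) := fun p hp ↦ by
    have := mem_T p hp
    simp only [mem_union, mem_filter, hp, true_and]
    omega
  rw [mstCountChi_eq_card_filter_schurPairs]
  refine (card_le_card cover).trans <| (card_union_le _ _).trans <| add_le_add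
    ((card_union_le _ _).trans <| add_le_add
      (card_le_choose_two_of_le (u := 0) (v := 0) fun p hp ↦ ?_)
      (card_le_choose_two_of_le (u := a) (v := a) fun p hp ↦ ?_))
    ((card_union_le _ _).trans <| add_le_add
      (card_le_choose_two_of_le (u := 2 * a + e) (v := 0) fun p hp ↦ ?_)
      (card_le_choose_two_of_le (u := 0) (v := 2 * a + e) fun p hp ↦ ?_))
  all_goals
    have := mem_T p (mem_filter.1 hp).1
    have := (mem_filter.1 hp).2
    omega

theorem exists_block_lengths (n : ℕ) : ∃ a e d : ℕ, n = 2 * a + e + d ∧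
    11 * ((a : ℤ) * (a - 1) + e * (e - 1) + 2 * (d * (d - 1))) ≤ 2 * ((n : ℤ) ^ 2 - 4 * n + 6) := by
  obtain ⟨q, r, hr, rfl⟩ : ∃ q r, r < 11 ∧ n = 11 * q + r := ⟨n / 11, n % 11, by omega, by omega⟩
  interval_cases r
  · exact ⟨4 * q, 2 * q, q, by ring, by push_cast; nlinarith⟩
  · exact ⟨4 * q, 2 * q + 1, q, by ring, by push_cast; nlinarith⟩
  · exact ⟨4 * q, 2 * q + 1, q + 1, by ring, by push_cast; nlinarith⟩
  · exact ⟨4 * q + 1, 2 * q + 1, q, by ring, by push_cast; nlinarith⟩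
  · exact ⟨4 * q + 1, 2 * q + 1, q + 1, by ring, by push_cast; nlinarith⟩
  · exact ⟨4 * q + 1, 2 * q + 2, q + 1, by ring, by push_cast; nlinarith⟩
  · exact ⟨4 * q + 2, 2 * q + 1, q + 1, by ring, by push_cast; nlinarith⟩
  · exact ⟨4 * q + 2, 2 * q + 2, q + 1, by ring, by push_cast; nlinarith⟩
  · exact ⟨4 * q + 3, 2 * q + 1, q + 1, by ring, by push_cast; nlinarith⟩
  · exact ⟨4 * q + 3, 2 * q + 2, q + 1, by ring, by push_cast; nlinarith⟩
  · exact ⟨4 * q + 3, 2 * q + 3, q + 1, by ring, by push_cast; nlinarith⟩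

theorem exists_eleven_mul_mstCountChi_le (n : ℕ) :
    ∃ χ : ℕ → Bool, 11 * (mstCountChi n χ : ℤ) ≤ (n : ℤ) ^ 2 - 4 * n + 6 := by
  obtain ⟨a, e, d, rfl, hade⟩ := exists_block_lengths n
  refine ⟨blockColoring a (2 * a + e), ?_⟩
  have count := mstCountChi_blockColoring_le a e d
  zify at count
  linarith [two_mul_cast_choose_two a, two_mul_cast_choose_two e, two_mul_cast_choose_two d]

-- For `n < 4` the subtraction on `ℕ` truncates, which does not change the quotient.
theorem cast_sq_sub_four_mul_add_six_div_eleven (n : ℕ) :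
    (((n ^ 2 - 4 * n + 6) / 11 : ℕ) : ℤ) = ((n : ℤ) ^ 2 - 4 * n + 6) / 11 := by
  rcases Nat.lt_or_ge n 4 with hn | hn
  · interval_cases n <;> norm_num
  · have : 4 * n ≤ n ^ 2 := by nlinarith
    push_cast [this]
    rfl

end SchurTriples

/-- For every `n ≥ 1`, every 2-coloring of `[n]` admits at least
`⌊(n² − 4n + 6)/11⌋` monochromatic Schur triples, and some 2-coloring attains
exactly this number; i.e. `M(n) = ⌊(n² − 4n + 6)/11⌋`. -/
theorem min_monochromatic_schur_triples (n : ℕ) (hn : 1 ≤ n) :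
    (∀ χ : ℕ → Bool, (n ^ 2 - 4 * n + 6) / 11 ≤ mstCountChi n χ) ∧
    (∃ χ : ℕ → Bool, mstCountChi n χ = (n ^ 2 - 4 * n + 6) / 11) := by
  have floor_eq := SchurTriples.cast_sq_sub_four_mul_add_six_div_eleven n
  have lower : ∀ χ : ℕ → Bool, (n ^ 2 - 4 * n + 6) / 11 ≤ mstCountChi n χ := fun χ ↦ by
    have := SchurTriples.le_eleven_mul_mstCountChi n χ
    omega
  obtain ⟨χ, hχ⟩ := SchurTriples.exists_eleven_mul_mstCountChi_le n
  exact ⟨lower, χ, le_antisymm (by omega) (lower χ)⟩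
end

section
/- The real quadratic function A(s,t) = 5s²/2 + 3t²/2 − 2st − 2t + 1 attains its global minimum over ℝ² at the unique point (s,t) = (4/11, 10/11), and the minimum value is A(4/11, 10/11) = 1/11. -/
section BinaryQuadraticForm

variable {R : Type*} [CommRing R]

theorem four_mul_binary_quadratic_eq (a b c x y : R) :
    4 * a * (a * x ^ 2 + b * x * y + c * y ^ 2) =
      (2 * a * x + b * y) ^ 2 - discrim a b c * y ^ 2 := by
  rw [discrim]
  ring

theorem binary_quadratic_pos_of_discrim_neg [LinearOrder R] [IsStrictOrderedRing R]
    {a b c x y : R} (ha : 0 < a) (hdiscrim : discrim a b c < 0) (hxy : (x, y) ≠ 0) :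
    0 < a * x ^ 2 + b * x * y + c * y ^ 2 := by
  rcases eq_or_ne y 0 with rfl | hy
  · have hx : x ≠ 0 := fun hx => hxy (Prod.mk_eq_zero.mpr ⟨hx, rfl⟩)
    simpa using mul_pos ha (sq_pos_of_ne_zero hx)
  · have hmul : 0 < 4 * a * (a * x ^ 2 + b * x * y + c * y ^ 2) := by
      rw [four_mul_binary_quadratic_eq, sub_eq_add_neg, ← neg_mul]
      exact add_pos_of_nonneg_of_pos (sq_nonneg _)
        (mul_pos (neg_pos.mpr hdiscrim) (sq_pos_of_ne_zero hy))
    exact pos_of_mul_pos_right hmul (by positivity)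

end BinaryQuadraticForm

section AreaFunction

variable {𝕜 : Type*} [Field 𝕜]

/-- The gradient `(5s - 2t, 3t - 2s - 2)` vanishes at `(4/11, 10/11)`, so the Taylor expansion there
consists of the value and the quadratic part alone. -/
theorem area_function_eq_add_binary_quadratic [CharZero 𝕜] (s t : 𝕜) :
    5 * s ^ 2 / 2 + 3 * t ^ 2 / 2 - 2 * s * t - 2 * t + 1 =
      1 / 11 + (5 / 2 * (s - 4 / 11) ^ 2 + -2 * (s - 4 / 11) * (t - 10 / 11) +
        3 / 2 * (t - 10 / 11) ^ 2) := by
  ring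

theorem area_function_min_general [LinearOrder 𝕜] [IsStrictOrderedRing 𝕜] :
    (5 * (4 / 11 : 𝕜) ^ 2 / 2 + 3 * (10 / 11 : 𝕜) ^ 2 / 2 -
        2 * (4 / 11) * (10 / 11) - 2 * (10 / 11) + 1 = 1 / 11) ∧
    ∀ s t : 𝕜, (s, t) ≠ ((4 / 11 : 𝕜), (10 / 11 : 𝕜)) →
      1 / 11 < 5 * s ^ 2 / 2 + 3 * t ^ 2 / 2 - 2 * s * t - 2 * t + 1 := by
  refine ⟨by simp [area_function_eq_add_binary_quadratic], fun s t hst => ?_⟩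
  have hdiscrim : discrim (5 / 2 : 𝕜) (-2) (3 / 2) < 0 := by norm_num [discrim]
  have hsub : (s - 4 / 11, t - 10 / 11) ≠ (0 : 𝕜 × 𝕜) := sub_ne_zero.mpr hst
  rw [area_function_eq_add_binary_quadratic]
  exact lt_add_of_pos_right _ (binary_quadratic_pos_of_discrim_neg (by norm_num) hdiscrim hsub)

end AreaFunction

/-- The quadratic `A(s,t) = 5s²/2 + 3t²/2 − 2st − 2t + 1` attains its global
minimum over `ℝ²` at the unique point `(4/11, 10/11)`, with minimum value `1/11`. -/
theorem area_function_min :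
    (5 * (4 / 11 : ℝ) ^ 2 / 2 + 3 * (10 / 11 : ℝ) ^ 2 / 2 -
        2 * (4 / 11) * (10 / 11) - 2 * (10 / 11) + 1 = 1 / 11) ∧
    ∀ s t : ℝ, (s, t) ≠ ((4 / 11 : ℝ), (10 / 11 : ℝ)) →
      1 / 11 < 5 * s ^ 2 / 2 + 3 * t ^ 2 / 2 - 2 * s * t - 2 * t + 1 :=
  area_function_min_general
end

section
/- Let α₈ be the unique real root of a³ + a² − 3 in the interval [1,2] (α₈ ≈ 1.174559). For every real a ≥ α₈ and all real s, t with 0 ≤ s ≤ t ≤ 1, the area A(s,t,a) satisfies A(s,t,a) ≥ 1/(2a(a² + 2a + 3)), and equality holds at s₀ = (a+1)/(a² + 2a + 3), t₀ = (a² + 2a + 2)/(a² + 2a + 3). -/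
/-- The area `A(s,t,a)` of the region
`Ω = {(x,y) : (x, y, x+ay) ∈ ([0,s] ∪ (t,1])³ ∨ (x, y, x+ay) ∈ (s,t]³}`,
measuring the asymptotic proportion of monochromatic generalized Schur triples
under the block coloring with red blocks `[0,s]`, `(t,1]` and blue block `(s,t]`. -/
noncomputable def areaA (a s t : ℝ) : ℝ :=
  (MeasureTheory.volume {p : ℝ × ℝ |
    ((p.1 ∈ Set.Icc 0 s ∪ Set.Ioc t 1) ∧ (p.2 ∈ Set.Icc 0 s ∪ Set.Ioc t 1) ∧
      (p.1 + a * p.2 ∈ Set.Icc 0 s ∪ Set.Ioc t 1)) ∨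
    (p.1 ∈ Set.Ioc s t ∧ p.2 ∈ Set.Ioc s t ∧ p.1 + a * p.2 ∈ Set.Ioc s t)}).toReal

/-!
The triples with prescribed blocks fill right triangles with hypotenuse of slope `-1 / a`, or
differences of such triangles, and a triangle of horizontal leg `c` has area `c ^ 2 / (2 * a)`. For
`s + a * s ≥ t` the resulting bound increases with `s`, so assume `s + a * s ≤ t`. If
`t + a * s ≥ 1`, the region contains three disjoint triangles of legs `s`, `u = t - s - a * s` and
`v = 1 - t`. Since `(1 + a) * s + u + v = 1`, the Cauchy–Schwarz inequality gives
`s ^ 2 + u ^ 2 + v ^ 2 ≥ 1 / ((1 + a) ^ 2 + 1 + 1)`, with equality exactly at the claimed minimizer.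

If `t + a * s < 1`, the third triangle is truncated at height `s`, and a fourth one of leg
`1 - t - a * t` may appear. Without the fourth triangle the bound is concave in `s` along the lines
where `u` is constant, so it suffices to check the boundary: the line `t + a * s = 1`, treated
above, the line `s = 0`, where `u = t` is already large enough, and the line `t + a * t = 1`. On
`t + a * t ≤ 1` the bound is a convex quadratic, handled by completing squares when `a` is at most
the golden ratio, and for larger `a` by monotonicity in `s`.

At the minimizer, `a ^ 3 + a ^ 2 ≥ 3` says that `a * t ≥ 1`, which rules out red triples with
`x ≤ s` and `y > t`; up to null sets, the region then consists of the three triangles only.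
-/

open Set MeasureTheory

section Integral

variable {a : ℝ}

theorem integral_sub_mul_div (ha : a ≠ 0) (q c : ℝ) :
    ∫ y in q..c / a, (c - a * y) = (c - a * q) ^ 2 / (2 * a) := by
  rw [intervalIntegral.integral_sub intervalIntegrable_const
      (Continuous.intervalIntegrable (by fun_prop) _ _), intervalIntegral.integral_const,
    intervalIntegral.integral_const_mul, integral_id, smul_eq_mul]
  field_simp
  ring

theorem lintegral_Ioi_ofReal_sub_mul_eq_zero {q c : ℝ} (ha : 0 ≤ a) (hc : c ≤ a * q) :
    ∫⁻ y in Ioi q, ENNReal.ofReal (c - a * y) = 0 := by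
  refine setLIntegral_eq_zero measurableSet_Ioi fun y (hy : q < y) ↦ ?_
  exact ENNReal.ofReal_of_nonpos
    (sub_nonpos.2 (hc.trans (mul_le_mul_of_nonneg_left hy.le ha)))

theorem lintegral_Ioi_ofReal_sub_mul (ha : 0 < a) (q c : ℝ) :
    ∫⁻ y in Ioi q, ENNReal.ofReal (c - a * y) =
      ENNReal.ofReal ((c - a * q)⁺ ^ 2 / (2 * a)) := by
  rcases le_total c (a * q) with hc | hc
  · rw [lintegral_Ioi_ofReal_sub_mul_eq_zero ha.le hc, posPart_of_nonpos (sub_nonpos.2 hc),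
      zero_pow two_ne_zero, zero_div, ENNReal.ofReal_zero]
  have hq : q ≤ c / a := (le_div_iff₀' ha).2 hc
  have hnonneg : 0 ≤ᵐ[volume.restrict (Ioc q (c / a))] fun y ↦ c - a * y :=
    ae_restrict_of_forall_mem measurableSet_Ioc fun y hy ↦
      sub_nonneg.2 ((le_div_iff₀' ha).1 hy.2)
  rw [← Ioc_union_Ioi_eq_Ioi hq, lintegral_union measurableSet_Ioi (Ioc_disjoint_Ioi le_rfl),
    lintegral_Ioi_ofReal_sub_mul_eq_zero ha.le (mul_div_cancel₀ c ha.ne').ge, add_zero,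
    ← ofReal_integral_eq_lintegral_ofReal (Continuous.integrableOn_Ioc (by fun_prop)) hnonneg,
    ← intervalIntegral.integral_of_le hq, integral_sub_mul_div ha.ne',
    posPart_of_nonneg (sub_nonneg.2 hc)]

end Integral

/-- The right triangle with right angle at `(p, q)` and hypotenuse on the line `x + a * y = r`,
for `a > 0`; it is empty if `r ≤ p + a * q`. The legs are left out and the hypotenuse is kept, to
match the half-open blocks of the coloring. -/
def cornerTriangle (a p q r : ℝ) : Set (ℝ × ℝ) :=
  {z | p < z.1 ∧ q < z.2 ∧ z.1 + a * z.2 ≤ r}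

section cornerTriangle

variable {a : ℝ} (p q r : ℝ)

theorem measurableSet_cornerTriangle (a : ℝ) : MeasurableSet (cornerTriangle a p q r) := by
  unfold cornerTriangle
  measurability

theorem volume_cornerTriangle (ha : 0 < a) :
    volume (cornerTriangle a p q r) = ENNReal.ofReal ((r - p - a * q)⁺ ^ 2 / (2 * a)) := by
  have hsection (y : ℝ) : volume ((fun x ↦ (x, y)) ⁻¹' cornerTriangle a p q r) =
      (Ioi q).indicator (fun y ↦ ENNReal.ofReal (r - p - a * y)) y := by
    by_cases hy : q < y
    · have : (fun x ↦ (x, y)) ⁻¹' cornerTriangle a p q r = Ioc p (r - a * y) := by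
        ext x
        simp [cornerTriangle, hy, le_sub_iff_add_le]
      rw [this, Real.volume_Ioc, indicator_of_mem (mem_Ioi.2 hy), sub_right_comm]
    · simp [cornerTriangle, hy]
  rw [Measure.volume_eq_prod, Measure.prod_apply_symm (measurableSet_cornerTriangle p q r a),
    lintegral_congr hsection, lintegral_indicator measurableSet_Ioi,
    lintegral_Ioi_ofReal_sub_mul ha]

theorem volume_cornerTriangle_ne_top (ha : 0 < a) : volume (cornerTriangle a p q r) ≠ ⊤ := by
  rw [volume_cornerTriangle p q r ha]
  exact ENNReal.ofReal_ne_top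

theorem measureReal_cornerTriangle (ha : 0 < a) :
    volume.real (cornerTriangle a p q r) = (r - p - a * q)⁺ ^ 2 / (2 * a) := by
  rw [measureReal_def, volume_cornerTriangle p q r ha, ENNReal.toReal_ofReal (by positivity)]

theorem measureReal_cornerTriangle_diff {q q' : ℝ} (ha : 0 < a) (hq : q ≤ q') :
    volume.real (cornerTriangle a p q r \ cornerTriangle a p q' r) =
      ((r - p - a * q)⁺ ^ 2 - (r - p - a * q')⁺ ^ 2) / (2 * a) := by
  have hsub : cornerTriangle a p q' r ⊆ cornerTriangle a p q r :=
    fun z hz ↦ ⟨hz.1, hq.trans_lt hz.2.1, hz.2.2⟩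
  rw [measureReal_sdiff hsub (measurableSet_cornerTriangle _ _ _ _)
      (volume_cornerTriangle_ne_top _ _ _ ha), measureReal_cornerTriangle _ _ _ ha,
    measureReal_cornerTriangle _ _ _ ha, sub_div]

end cornerTriangle

/-- The region `Ω(a, s, t)` whose area is `areaA a s t`. -/
def monochromaticRegion (a s t : ℝ) : Set (ℝ × ℝ) :=
  {z | (z.1 ∈ Icc 0 s ∪ Ioc t 1 ∧ z.2 ∈ Icc 0 s ∪ Ioc t 1 ∧ z.1 + a * z.2 ∈ Icc 0 s ∪ Ioc t 1) ∨
    (z.1 ∈ Ioc s t ∧ z.2 ∈ Ioc s t ∧ z.1 + a * z.2 ∈ Ioc s t)}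

theorem areaA_eq_measureReal (a s t : ℝ) : areaA a s t = volume.real (monochromaticRegion a s t) :=
  rfl

section Region

variable {a s t : ℝ}

theorem volume_monochromaticRegion_ne_top (a : ℝ) (hs : 0 ≤ s) (hst : s ≤ t) (ht : t ≤ 1) :
    volume (monochromaticRegion a s t) ≠ ⊤ := by
  have hred : Icc 0 s ∪ Ioc t 1 ⊆ Icc 0 1 :=
    union_subset (Icc_subset_Icc_right (hst.trans ht))
      (Ioc_subset_Icc_self.trans (Icc_subset_Icc_left (hs.trans hst)))
  have hblue : Ioc s t ⊆ Icc 0 1 := Ioc_subset_Icc_self.trans (Icc_subset_Icc hs ht)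
  have hsub : monochromaticRegion a s t ⊆ Icc 0 1 ×ˢ Icc 0 1 := by
    rintro z (⟨hx, hy, -⟩ | ⟨hx, hy, -⟩)
    · exact ⟨hred hx, hred hy⟩
    · exact ⟨hblue hx, hblue hy⟩
  exact measure_ne_top_of_subset hsub (isCompact_Icc.prod isCompact_Icc).measure_ne_top

theorem cornerTriangle_subset_monochromaticRegion_bottom (ha : 1 ≤ a) :
    cornerTriangle a 0 0 s ⊆ monochromaticRegion a s t := by
  rintro ⟨x, y⟩ ⟨hx, hy, hz⟩
  dsimp only at hx hy hz
  have hay : y ≤ a * y := le_mul_of_one_le_left hy.le ha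
  exact .inl ⟨.inl ⟨hx.le, by linarith⟩, .inl ⟨hy.le, by linarith⟩, .inl ⟨by linarith, hz⟩⟩

theorem cornerTriangle_subset_monochromaticRegion_middle (ha : 1 ≤ a) (hs : 0 ≤ s) :
    cornerTriangle a s s t ⊆ monochromaticRegion a s t := by
  rintro ⟨x, y⟩ ⟨hx, hy, hz⟩
  dsimp only at hx hy hz
  have hay : y ≤ a * y := le_mul_of_one_le_left (hs.trans hy.le) ha
  exact .inr ⟨⟨hx, by linarith⟩, ⟨hy, by linarith⟩, ⟨by linarith, hz⟩⟩

theorem cornerTriangle_diff_subset_monochromaticRegion (ha : 0 ≤ a) :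
    cornerTriangle a t 0 1 \ cornerTriangle a t s 1 ⊆ monochromaticRegion a s t := by
  rintro ⟨x, y⟩ ⟨⟨hx, hy, hz⟩, hys⟩
  have hys : y ≤ s := not_lt.1 fun h ↦ hys ⟨hx, h, hz⟩
  dsimp only at hx hy hz
  have hay : 0 ≤ a * y := by positivity
  exact .inl ⟨.inr ⟨hx, by linarith⟩, .inl ⟨hy.le, hys⟩, .inr ⟨by linarith, hz⟩⟩

theorem cornerTriangle_subset_monochromaticRegion_top (ha : 1 ≤ a) (ht : 0 ≤ t) :
    cornerTriangle a t t 1 ⊆ monochromaticRegion a s t := by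
  rintro ⟨x, y⟩ ⟨hx, hy, hz⟩
  dsimp only at hx hy hz
  have hay : y ≤ a * y := le_mul_of_one_le_left (ht.trans hy.le) ha
  exact .inl ⟨.inr ⟨hx, by linarith⟩, .inr ⟨hy, by linarith⟩, .inr ⟨by linarith, hz⟩⟩

/-- Disjoint pieces of `monochromaticRegion a s t`, chosen so that together they already force the
minimal area: the triangle of triples in `[0, s]`, the triangle of triples in `(s, t]`, the triples
with `x` and `x + a * y` in `(t, 1]` and `y` in `[0, s]`, and the triangle of triples in
`(t, 1]`. -/
def coreRegion (a s t : ℝ) : Set (ℝ × ℝ) :=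
  cornerTriangle a 0 0 s ∪ cornerTriangle a s s t ∪
    (cornerTriangle a t 0 1 \ cornerTriangle a t s 1 ∪ cornerTriangle a t t 1)

/-- `2 * a` times the area of `coreRegion a s t`. -/
noncomputable def areaBound (a s t : ℝ) : ℝ :=
  s ^ 2 + (t - s - a * s)⁺ ^ 2 + ((1 - t) ^ 2 - (1 - t - a * s)⁺ ^ 2) + (1 - t - a * t)⁺ ^ 2

theorem coreRegion_subset_monochromaticRegion (ha : 1 ≤ a) (hs : 0 ≤ s) (hst : s ≤ t) :
    coreRegion a s t ⊆ monochromaticRegion a s t :=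
  union_subset
    (union_subset (cornerTriangle_subset_monochromaticRegion_bottom ha)
      (cornerTriangle_subset_monochromaticRegion_middle ha hs))
    (union_subset (cornerTriangle_diff_subset_monochromaticRegion (one_pos.le.trans ha))
      (cornerTriangle_subset_monochromaticRegion_top ha (hs.trans hst)))

theorem disjoint_cornerTriangle_bottom_middle (ha : 0 ≤ a) :
    Disjoint (cornerTriangle a 0 0 s) (cornerTriangle a s s t) := by
  refine disjoint_left.2 fun z hbot hmid ↦ ?_
  linarith [hbot.2.2, hmid.1, mul_nonneg ha hbot.2.1.le]

theorem disjoint_cornerTriangle_diff_top (hst : s ≤ t) :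
    Disjoint (cornerTriangle a t 0 1 \ cornerTriangle a t s 1) (cornerTriangle a t t 1) :=
  disjoint_left.2 fun _ hdiff htop ↦ hdiff.2 ⟨htop.1, hst.trans_lt htop.2.1, htop.2.2⟩

theorem disjoint_coreRegion_left_right (ha : 0 ≤ a) (hs : 0 ≤ s) (hst : s ≤ t) :
    Disjoint (cornerTriangle a 0 0 s ∪ cornerTriangle a s s t)
      (cornerTriangle a t 0 1 \ cornerTriangle a t s 1 ∪ cornerTriangle a t t 1) := by
  refine disjoint_left.2 fun z hleft hright ↦ ?_
  have hle : z.1 ≤ t := by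
    rcases hleft with hz | hz
    · linarith [hz.2.2, mul_nonneg ha hz.2.1.le]
    · linarith [hz.2.2, mul_nonneg ha (hs.trans hz.2.1.le)]
  exact hle.not_gt (hright.elim (fun hz ↦ hz.1.1) fun hz ↦ hz.1)

theorem measureReal_coreRegion (ha : 0 < a) (hs : 0 ≤ s) (hst : s ≤ t) (ht : t ≤ 1) :
    volume.real (coreRegion a s t) = areaBound a s t / (2 * a) := by
  have hfin (p q r : ℝ) := volume_cornerTriangle_ne_top p q r ha
  have hmeas (p q r : ℝ) := measurableSet_cornerTriangle p q r a
  have hdiff_fin : volume (cornerTriangle a t 0 1 \ cornerTriangle a t s 1) ≠ ⊤ :=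
    measure_ne_top_of_subset sdiff_subset (hfin t 0 1)
  rw [coreRegion, measureReal_union (disjoint_coreRegion_left_right ha.le hs hst)
      (((hmeas _ _ _).diff (hmeas _ _ _)).union (hmeas _ _ _))
      (measure_union_ne_top (hfin _ _ _) (hfin _ _ _))
      (measure_union_ne_top hdiff_fin (hfin _ _ _)),
    measureReal_union (disjoint_cornerTriangle_bottom_middle ha.le) (hmeas _ _ _) (hfin _ _ _)
      (hfin _ _ _),
    measureReal_union (disjoint_cornerTriangle_diff_top hst) (hmeas _ _ _) hdiff_fin (hfin _ _ _),
    measureReal_cornerTriangle_diff _ _ ha hs]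
  simp only [measureReal_cornerTriangle _ _ _ ha, sub_zero, mul_zero, posPart_of_nonneg hs,
    posPart_of_nonneg (sub_nonneg.2 ht), areaBound]
  ring

theorem areaBound_div_le_areaA (ha : 1 ≤ a) (hs : 0 ≤ s) (hst : s ≤ t) (ht : t ≤ 1) :
    areaBound a s t / (2 * a) ≤ areaA a s t := by
  rw [← measureReal_coreRegion (one_pos.trans_le ha) hs hst ht, areaA_eq_measureReal]
  exact measureReal_mono (coreRegion_subset_monochromaticRegion ha hs hst)
    (volume_monochromaticRegion_ne_top a hs hst ht)

theorem monochromaticRegion_ae_le (ha : 0 < a) (ht : t ≤ 1) (hu : s + a * s ≤ t)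
    (hat : 1 ≤ a * t) :
    monochromaticRegion a s t ≤ᵐ[volume]
      (cornerTriangle a 0 0 s ∪ cornerTriangle a s s t ∪ cornerTriangle a t 0 1 : Set (ℝ × ℝ)) := by
  have ht0 : 0 < t := pos_of_mul_pos_right (one_pos.trans_le hat) ha.le
  have hfst : ∀ᵐ z : ℝ × ℝ, z.1 ≠ 0 :=
    Measure.quasiMeasurePreserving_fst.ae (volume.ae_ne (0 : ℝ))
  have hsnd : ∀ᵐ z : ℝ × ℝ, z.2 ≠ 0 :=
    Measure.quasiMeasurePreserving_snd.ae (volume.ae_ne (0 : ℝ))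
  filter_upwards [hfst, hsnd] with z hx0 hy0 hz
  rcases hz with ⟨hx, hy, hz⟩ | ⟨hx, hy, hz⟩
  · have hy_pos : 0 < z.2 := hy0.symm.lt_of_le (hy.elim (fun h ↦ h.1) fun h ↦ ht0.le.trans h.1.le)
    have hz_le : z.1 + a * z.2 ≤ 1 := by
      rcases hz with hz | hz
      · linarith [hz.2, mul_nonneg ha.le (hz.1.trans hz.2)]
      · exact hz.2
    rcases hx with hx | hx
    · have hx_pos : 0 < z.1 := hx0.symm.lt_of_le hx.1
      have hy_le : z.2 ≤ s := by
        rcases hy with hy | hy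
        · exact hy.2
        · linarith [mul_lt_mul_of_pos_left hy.1 ha]
      have hz_le_t : z.1 + a * z.2 ≤ t := by
        linarith [hx.2, mul_le_mul_of_nonneg_left hy_le ha.le]
      exact .inl (.inl ⟨hx_pos, hy_pos, hz.elim (fun h ↦ h.2) fun h ↦ (hz_le_t.not_gt h.1).elim⟩)
    · exact .inr ⟨hx.1, hy_pos, hz_le⟩
  · exact .inl (.inr ⟨hx.1, hy.1, hz.2⟩)

theorem areaA_le_of_one_le_mul (ha : 0 < a) (hs : 0 ≤ s) (ht : t ≤ 1) (hu : s + a * s ≤ t)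
    (hat : 1 ≤ a * t) :
    areaA a s t ≤ (s ^ 2 + (t - s - a * s) ^ 2 + (1 - t) ^ 2) / (2 * a) := by
  have hfin (p q r : ℝ) := volume_cornerTriangle_ne_top p q r ha
  calc areaA a s t
      ≤ volume.real (cornerTriangle a 0 0 s ∪ cornerTriangle a s s t ∪ cornerTriangle a t 0 1) :=
        ENNReal.toReal_mono
          (measure_union_ne_top (measure_union_ne_top (hfin _ _ _) (hfin _ _ _)) (hfin _ _ _))
          (measure_mono_ae (monochromaticRegion_ae_le ha ht hu hat))
    _ ≤ volume.real (cornerTriangle a 0 0 s) + volume.real (cornerTriangle a s s t) +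
          volume.real (cornerTriangle a t 0 1) :=
        (measureReal_union_le _ _).trans (by gcongr; exact measureReal_union_le _ _)
    _ = _ := by
        simp only [measureReal_cornerTriangle _ _ _ ha, mul_zero, sub_zero]
        rw [posPart_of_nonneg hs, posPart_of_nonneg (a := t - s - a * s) (by linarith),
          posPart_of_nonneg (sub_nonneg.2 ht)]
        ring

end Region

section Minimization

variable {a s t : ℝ}

theorem one_le_mul_add_sq_of_one_le {u v : ℝ} (h : 1 ≤ (1 + a) * s + u + v) :
    1 ≤ (a ^ 2 + 2 * a + 3) * (s ^ 2 + u ^ 2 + v ^ 2) := by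
  have cauchy_schwarz :=
    Finset.sum_mul_sq_le_sq_mul_sq Finset.univ ![1 + a, 1, 1] ![s, u, v]
  simp only [Fin.sum_univ_three, Matrix.cons_val, one_mul] at cauchy_schwarz
  calc 1 ≤ ((1 + a) * s + u + v) ^ 2 := one_le_pow₀ h
    _ ≤ _ := cauchy_schwarz
    _ = _ := by ring

theorem concaveOn_quadratic {c : ℝ} (hc : c ≤ 0) (b d : ℝ) :
    ConcaveOn ℝ univ fun x ↦ c * x ^ 2 + b * x + d := by
  have sq : ConcaveOn ℝ univ fun x : ℝ ↦ c * x ^ 2 := by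
    simpa [Pi.neg_def] using (even_two.convexOn_pow.smul (neg_nonneg.2 hc)).neg
  exact (sq.add ((LinearMap.mul ℝ ℝ b).concaveOn convex_univ)).add_const d

/-- `areaBound a s t` without its last term, on the range `s + a * s ≤ t`, `t + a * s ≤ 1` where the
remaining positive parts are inactive. -/
noncomputable def quadraticBound (a s t : ℝ) : ℝ :=
  s ^ 2 + (t - s - a * s) ^ 2 + ((1 - t) ^ 2 - (1 - t - a * s) ^ 2)

theorem one_le_mul_quadraticBound_add_sq_of_sq_le (ha : 1 ≤ a) (hgold : a ^ 2 ≤ a + 1) (s t : ℝ) :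
    1 ≤ (a ^ 2 + 2 * a + 3) * (quadraticBound a s t + (1 - t - a * t) ^ 2) := by
  -- `m` is the determinant of the quadratic part, as a form in `s` and `t`.
  set m := 2 * a ^ 3 + 2 * a ^ 2 + 4 * a + 3 with hm
  have complete_squares :
      (2 * a + 2) * m *
          ((a ^ 2 + 2 * a + 3) * (quadraticBound a s t + (1 - t - a * t) ^ 2) - 1) =
        (a ^ 2 + 2 * a + 3) *
            (m * ((2 * a + 2) * s - ((2 * a + 1) * t - a)) ^ 2 + (m * t - (3 * a + 2)) ^ 2) +
          2 * a * (a + 1) * (a + 1 - a ^ 2) * (a ^ 3 + a ^ 2 + a - 2) := by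
    rw [hm, quadraticBound]
    ring
  have : 0 ≤ a + 1 - a ^ 2 := sub_nonneg.2 hgold
  have hcubic : 0 ≤ a ^ 3 + a ^ 2 + a - 2 := by
    linarith [one_le_pow₀ (n := 3) ha, one_le_pow₀ (n := 2) ha]
  refine sub_nonneg.1 (nonneg_of_mul_nonneg_right (a := (2 * a + 2) * m) ?_ (by positivity))
  rw [complete_squares]
  positivity

theorem one_le_mul_quadraticBound_add_sq_of_le_sq (ha : 0 ≤ a) (hgold : a + 1 ≤ a ^ 2) (hs : 0 ≤ s)
    (ht : t + a * t ≤ 1) :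
    1 ≤ (a ^ 2 + 2 * a + 3) * (quadraticBound a s t + (1 - t - a * t) ^ 2) := by
  have hslope : (2 * a + 1) * t ≤ a := by
    have : (1 + a) * ((2 * a + 1) * t) ≤ (1 + a) * a := by nlinarith
    exact le_of_mul_le_mul_left this (by positivity)
  have hmono : t ^ 2 ≤ quadraticBound a s t := by
    have expand : quadraticBound a s t - t ^ 2 =
        (2 * a + 2) * s ^ 2 + 2 * (a - (2 * a + 1) * t) * s := by
      rw [quadraticBound]
      ring
    have := sub_nonneg.2 hslope
    rw [← sub_nonneg, expand]
    positivity
  calc 1 ≤ (a ^ 2 + 2 * a + 3) * (t ^ 2 + (1 - t - a * t) ^ 2 + 0 ^ 2) :=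
        one_le_mul_add_sq_of_one_le (by linarith)
    _ ≤ _ := by
        rw [zero_pow two_ne_zero, add_zero]
        gcongr

theorem one_le_mul_quadraticBound_add_sq (ha : 1 ≤ a) (hs : 0 ≤ s) (ht : t + a * t ≤ 1) :
    1 ≤ (a ^ 2 + 2 * a + 3) * (quadraticBound a s t + (1 - t - a * t) ^ 2) := by
  rcases le_total (a ^ 2) (a + 1) with hgold | hgold
  · exact one_le_mul_quadraticBound_add_sq_of_sq_le ha hgold s t
  · exact one_le_mul_quadraticBound_add_sq_of_le_sq (by linarith) hgold hs ht

theorem one_le_mul_quadraticBound_of_add_eq_one (h : t + a * s = 1) :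
    1 ≤ (a ^ 2 + 2 * a + 3) * quadraticBound a s t := by
  have : quadraticBound a s t = s ^ 2 + (t - s - a * s) ^ 2 + (1 - t) ^ 2 := by
    rw [quadraticBound, show 1 - t - a * s = 0 by linarith]
    ring
  rw [this]
  exact one_le_mul_add_sq_of_one_le (by linarith)

theorem concaveOn_quadraticBound_line (ha : 1 ≤ a) (u : ℝ) :
    ConcaveOn ℝ univ fun x ↦ quadraticBound a x (u + x + a * x) := by
  convert concaveOn_quadratic (c := 1 - 2 * a - 3 * a ^ 2) (by nlinarith) (2 * a * (1 - u)) (u ^ 2)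
    using 2 with x
  rw [quadraticBound]
  ring

theorem one_le_mul_quadraticBound (ha : 1 ≤ a) (hs : 0 ≤ s) (ht : 1 ≤ t + a * t)
    (hst : t + a * s ≤ 1) : 1 ≤ (a ^ 2 + 2 * a + 3) * quadraticBound a s t := by
  obtain ⟨u, rfl⟩ : ∃ u, t = u + s + a * s := ⟨t - s - a * s, by ring⟩
  rcases le_total 1 ((1 + a) * u) with hu | hu
  · calc 1 ≤ (a ^ 2 + 2 * a + 3) * (u ^ 2 + 0 ^ 2 + 0 ^ 2) :=
          one_le_mul_add_sq_of_one_le (by linarith)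
      _ ≤ _ := by
          gcongr
          rw [quadraticBound]
          nlinarith [mul_nonneg (by positivity : 0 ≤ a * s) (sub_nonneg.2 hst)]
  obtain ⟨l, hl⟩ : ∃ l, (1 + a) * (u + l + a * l) = 1 :=
    ⟨(1 / (1 + a) - u) / (1 + a), by field_simp; ring⟩
  obtain ⟨r, hr⟩ : ∃ r, u + r + a * r + a * r = 1 :=
    ⟨(1 - u) / (1 + 2 * a), by field_simp; ring⟩
  have hpos : 0 < (1 + a) ^ 2 := by positivity
  have hl0 : 0 ≤ l := nonneg_of_mul_nonneg_right (a := (1 + a) ^ 2) (by linarith) hpos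
  have hls : l ≤ s := le_of_mul_le_mul_left (a := (1 + a) ^ 2) (by linarith) hpos
  have hsr : s ≤ r := by nlinarith
  have left_end : 1 ≤ (a ^ 2 + 2 * a + 3) * quadraticBound a l (u + l + a * l) := by
    have := one_le_mul_quadraticBound_add_sq (t := u + l + a * l) ha hl0 (by linarith)
    rwa [show 1 - (u + l + a * l) - a * (u + l + a * l) = 0 by linarith, zero_pow two_ne_zero,
      add_zero] at this
  have right_end : 1 ≤ (a ^ 2 + 2 * a + 3) * quadraticBound a r (u + r + a * r) :=
    one_le_mul_quadraticBound_of_add_eq_one hr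
  have hmin := (concaveOn_quadraticBound_line ha u).min_le_of_mem_Icc (mem_univ l) (mem_univ r)
    ⟨hls, hsr⟩
  rcases min_le_iff.1 hmin with h | h
  · exact left_end.trans (by gcongr)
  · exact right_end.trans (by gcongr)

theorem one_le_mul_areaBound_of_le (ha : 1 ≤ a) (hs : 0 ≤ s) (hu : s + a * s ≤ t)
    (hst : t + a * s ≤ 1) : 1 ≤ (a ^ 2 + 2 * a + 3) * areaBound a s t := by
  rw [areaBound, posPart_of_nonneg (a := t - s - a * s) (by linarith),
    posPart_of_nonneg (a := 1 - t - a * s) (by linarith), ← quadraticBound]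
  rcases le_total (t + a * t) 1 with ht | ht
  · rw [posPart_of_nonneg (by linarith)]
    exact one_le_mul_quadraticBound_add_sq ha hs ht
  · rw [posPart_of_nonpos (by linarith), zero_pow two_ne_zero, add_zero]
    exact one_le_mul_quadraticBound ha hs ht hst

theorem areaBound_le_areaBound_of_le_add_mul {r : ℝ} (ha : 0 ≤ a) (hr : 0 ≤ r) (htr : t ≤ r + a * r)
    (hrs : r ≤ s) (hst : t + a * s ≤ 1) : areaBound a r t ≤ areaBound a s t := by
  have har : a * r ≤ a * s := by gcongr
  rw [areaBound, areaBound, posPart_of_nonpos (a := t - s - a * s) (by linarith),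
    posPart_of_nonpos (a := t - r - a * r) (by linarith),
    posPart_of_nonneg (a := 1 - t - a * s) (by linarith),
    posPart_of_nonneg (a := 1 - t - a * r) (by linarith)]
  gcongr
  linarith

theorem one_le_mul_areaBound (ha : 1 ≤ a) (hs : 0 ≤ s) (hst : s ≤ t) :
    1 ≤ (a ^ 2 + 2 * a + 3) * areaBound a s t := by
  rcases le_total 1 (t + a * s) with hv | hv
  · calc 1 ≤ (a ^ 2 + 2 * a + 3) * (s ^ 2 + (t - s - a * s)⁺ ^ 2 + (1 - t) ^ 2) :=
          one_le_mul_add_sq_of_one_le (by linarith [le_posPart (t - s - a * s)])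
      _ ≤ _ := by
          rw [areaBound, posPart_of_nonpos (a := 1 - t - a * s) (by linarith),
            zero_pow two_ne_zero, sub_zero]
          exact mul_le_mul_of_nonneg_left (le_add_of_nonneg_right (sq_nonneg _)) (by positivity)
  rcases le_total (s + a * s) t with hu | hu
  · exact one_le_mul_areaBound_of_le ha hs hu hv
  obtain ⟨r, hr⟩ : ∃ r, r + a * r = t := ⟨t / (1 + a), by field_simp⟩
  have hr0 : 0 ≤ r := by nlinarith
  have hrs : r ≤ s := by nlinarith
  calc 1 ≤ (a ^ 2 + 2 * a + 3) * areaBound a r t :=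
        one_le_mul_areaBound_of_le ha hr0 hr.le (by nlinarith)
    _ ≤ _ := by
        gcongr
        exact areaBound_le_areaBound_of_le_add_mul (by linarith) hr0 hr.ge hrs hv

theorem one_div_le_areaA (ha : 1 ≤ a) (hs : 0 ≤ s) (hst : s ≤ t) (ht : t ≤ 1) :
    1 / (2 * a * (a ^ 2 + 2 * a + 3)) ≤ areaA a s t := by
  refine le_trans ?_ (areaBound_div_le_areaA ha hs hst ht)
  rw [div_le_div_iff₀ (by positivity) (by positivity)]
  nlinarith [one_le_mul_areaBound ha hs hst]

theorem areaA_minimizer_le (ha : 0 < a) (hcubic : 3 ≤ a ^ 3 + a ^ 2) :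
    areaA a ((a + 1) / (a ^ 2 + 2 * a + 3)) ((a ^ 2 + 2 * a + 2) / (a ^ 2 + 2 * a + 3)) ≤
      1 / (2 * a * (a ^ 2 + 2 * a + 3)) := by
  set d := a ^ 2 + 2 * a + 3 with hd
  have hd0 : 0 < d := by positivity
  have hv : 1 - (a ^ 2 + 2 * a + 2) / d = 1 / d := by
    field_simp
    ring
  have hu : (a ^ 2 + 2 * a + 2) / d - (a + 1) / d - a * ((a + 1) / d) = 1 / d := by
    field_simp
    ring
  have hleg : 0 ≤ 1 / d := by positivity
  have hat : 1 ≤ a * ((a ^ 2 + 2 * a + 2) / d) := by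
    rw [mul_div_assoc', one_le_div hd0]
    linarith
  refine (areaA_le_of_one_le_mul ha (by positivity) (by linarith) (by linarith) hat).trans_eq ?_
  rw [hu, hv]
  field_simp
  rw [hd]
  ring

end Minimization

/-- For `a ≥ α₈` (the root of `a³ + a² − 3` in `[1,2]`), the minimum of
`A(s,t,a)` over `0 ≤ s ≤ t ≤ 1` is `1/(2a(a² + 2a + 3))`, attained at
`s₀ = (a+1)/(a²+2a+3)`, `t₀ = (a²+2a+2)/(a²+2a+3)`. -/
theorem area_min_large_a (α : ℝ) (hα : α ∈ Set.Icc (1 : ℝ) 2)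
    (hroot : α ^ 3 + α ^ 2 - 3 = 0) (a : ℝ) (ha : α ≤ a) :
    (∀ s t : ℝ, 0 ≤ s → s ≤ t → t ≤ 1 →
      1 / (2 * a * (a ^ 2 + 2 * a + 3)) ≤ areaA a s t) ∧
    areaA a ((a + 1) / (a ^ 2 + 2 * a + 3)) ((a ^ 2 + 2 * a + 2) / (a ^ 2 + 2 * a + 3)) =
      1 / (2 * a * (a ^ 2 + 2 * a + 3)) := by
  have ha1 : 1 ≤ a := hα.1.trans ha
  have hα0 : 0 ≤ α := one_pos.le.trans hα.1
  have hcubic : 3 ≤ a ^ 3 + a ^ 2 :=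
    calc 3 = α ^ 3 + α ^ 2 := by linarith
      _ ≤ a ^ 3 + a ^ 2 := by gcongr
  refine ⟨fun s t hs hst ht ↦ one_div_le_areaA ha1 hs hst ht,
    le_antisymm (areaA_minimizer_le (one_pos.trans_le ha1) hcubic)
      (one_div_le_areaA ha1 (by positivity) ?_ ?_)⟩
  · exact div_le_div_of_nonneg_right (by nlinarith) (by positivity)
  · exact div_le_one_of_le₀ (by linarith) (by positivity)
end

section
/- Let a > 0 and 0 ≤ s ≤ t ≤ 1 be real numbers with a·s > 1. Then the area A(s,t,a) equals (s² − 2ts + 2s + t² − 2t + 1)/(2a). -/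
/-!
Write `R` for the red set. Since `1 ≤ a * s`, a triple `(x, y, x + a * y)` in `[0, 1]` has `y ≤ s`.
So there is no blue triple, and for a red triple the condition `y ∈ R` says only that `0 ≤ y`. In
the coordinates `(x, z) = (x, x + a * y)`, whose Jacobian is `a`, the red region is therefore the
half `x ≤ z` of the square `R × R`, and by symmetry its area is `|R| ^ 2 / (2 * a)`.
-/

open MeasureTheory Set

theorem ae_prod_fst_ne_snd {α : Type*} [MeasurableSpace α] [MeasurableEq α] {μ ν : Measure α}
    [SFinite ν] [NullSingletonClass ν] : ∀ᵐ p ∂μ.prod ν, p.1 ≠ p.2 := by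
  refine (Measure.ae_prod_iff_ae_ae measurableSet_diagonal.compl).2 (ae_of_all μ fun x ↦ ?_)
  filter_upwards [Measure.ae_ne ν x] with y hy using hy.symm

section HalfSquare

variable {α : Type*} [LinearOrder α] [TopologicalSpace α] [OrderClosedTopology α]
  [SecondCountableTopology α] [MeasurableSpace α] [OpensMeasurableSpace α]
  {μ : Measure α} [SFinite μ] [NullSingletonClass μ]

theorem two_mul_measure_prod_self_inter_fst_le_snd (S : Set α) :
    2 * μ.prod μ (S ×ˢ S ∩ {p | p.1 ≤ p.2}) = μ S ^ 2 := by
  have sdiff_ae_eq : (S ×ˢ S \ {p | p.1 ≤ p.2} : Set (α × α)) =ᵐ[μ.prod μ]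
      MeasurableEquiv.prodComm ⁻¹' (S ×ˢ S ∩ {p | p.1 ≤ p.2}) := by
    filter_upwards [ae_prod_fst_ne_snd (μ := μ) (ν := μ)] with p hp
    refine propext ?_
    change ((p.1 ∈ S ∧ p.2 ∈ S) ∧ ¬p.1 ≤ p.2) ↔ (p.2 ∈ S ∧ p.1 ∈ S) ∧ p.2 ≤ p.1
    rw [not_le, lt_iff_le_and_ne, and_iff_left hp.symm, and_comm (a := p.1 ∈ S)]
  have measure_sdiff_eq : μ.prod μ (S ×ˢ S \ {p | p.1 ≤ p.2}) =
      μ.prod μ (S ×ˢ S ∩ {p | p.1 ≤ p.2}) :=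
    (measure_congr sdiff_ae_eq).trans <|
      MeasurePreserving.measure_preimage_equiv (f := MeasurableEquiv.prodComm)
        Measure.measurePreserving_swap _
  rw [sq, ← Measure.prod_prod, ← measure_inter_add_sdiff (S ×ˢ S) measurableSet_le',
    measure_sdiff_eq, two_mul]

theorem measureReal_prod_self_inter_fst_le_snd (S : Set α) :
    (μ.prod μ).real (S ×ˢ S ∩ {p | p.1 ≤ p.2}) = μ.real S ^ 2 / 2 := by
  have h := congrArg ENNReal.toReal (two_mul_measure_prod_self_inter_fst_le_snd (μ := μ) S)
  rw [ENNReal.toReal_mul, ENNReal.toReal_pow, ENNReal.toReal_ofNat] at h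
  exact eq_div_of_mul_eq two_ne_zero ((mul_comm _ _).trans h)

end HalfSquare

theorem volume_real_preimage_shear {a : ℝ} (ha : a ≠ 0) (U : Set (ℝ × ℝ)) :
    volume.real ((fun p : ℝ × ℝ ↦ (p.1, p.1 + a * p.2)) ⁻¹' U) = |a|⁻¹ * volume.real U := by
  let shear : ℝ × ℝ →ₗ[ℝ] ℝ × ℝ :=
    (LinearMap.fst ℝ ℝ ℝ).prod (LinearMap.fst ℝ ℝ ℝ + a • LinearMap.snd ℝ ℝ ℝ)
  have det_shear : LinearMap.det shear = a := by
    rw [← LinearMap.det_toMatrix (Module.Basis.finTwoProd ℝ), Matrix.det_fin_two]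
    simp [shear, LinearMap.toMatrix_apply]
  have measure_preimage := Measure.addHaar_preimage_linearMap volume (det_shear.symm ▸ ha) U
  rw [det_shear] at measure_preimage
  change (volume (shear ⁻¹' U)).toReal = _
  rw [measure_preimage, ENNReal.toReal_mul, ENNReal.toReal_ofReal (abs_nonneg _), abs_inv,
    measureReal_def]

/-- The pairs `(x, y)` whose generalized Schur triple `(x, y, x + a * y)` lies in `S`, that is, is
monochromatic in the color class `S`. -/
def schurPairs (a : ℝ) (S : Set ℝ) : Set (ℝ × ℝ) :=
  {p | p.1 ∈ S ∧ p.2 ∈ S ∧ p.1 + a * p.2 ∈ S}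

section SchurPairs

variable {a s : ℝ} {R B : Set ℝ}

theorem le_of_add_mul_le_one (ha : 0 < a) (has : 1 ≤ a * s) {x y : ℝ} (hx : 0 ≤ x)
    (hxy : x + a * y ≤ 1) : y ≤ s :=
  le_of_mul_le_mul_left (by linarith) ha

theorem schurPairs_eq_empty (ha : 0 < a) (has : 1 ≤ a * s) (hB : B ⊆ Ioc s 1) :
    schurPairs a B = ∅ := by
  refine eq_empty_of_forall_notMem fun p ⟨hx, hy, hz⟩ ↦ (hB hy).1.not_ge ?_
  have hs : 0 ≤ s := (pos_of_mul_pos_right (one_pos.trans_le has) ha.le).le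
  exact le_of_add_mul_le_one ha has (hs.trans (hB hx).1.le) (hB hz).2

theorem schurPairs_eq_preimage_shear (ha : 0 < a) (has : 1 ≤ a * s) (hsR : Icc 0 s ⊆ R)
    (hR : R ⊆ Icc 0 1) :
    schurPairs a R =
      (fun p : ℝ × ℝ ↦ (p.1, p.1 + a * p.2)) ⁻¹' (R ×ˢ R ∩ {p | p.1 ≤ p.2}) := by
  ext ⟨x, y⟩
  change (x ∈ R ∧ y ∈ R ∧ x + a * y ∈ R) ↔ (x ∈ R ∧ x + a * y ∈ R) ∧ x ≤ x + a * y
  rw [le_add_iff_nonneg_right, mul_nonneg_iff_of_pos_left ha]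
  constructor
  · rintro ⟨hx, hy, hz⟩
    exact ⟨⟨hx, hz⟩, (hR hy).1⟩
  · rintro ⟨⟨hx, hz⟩, hy⟩
    exact ⟨hx, hsR ⟨hy, le_of_add_mul_le_one ha has (hR hx).1 (hR hz).2⟩, hz⟩

theorem area_region_R1_general (ha : 0 < a) (has : 1 ≤ a * s) (hsR : Icc 0 s ⊆ R)
    (hR : R ⊆ Icc 0 1) (hB : B ⊆ Ioc s 1) :
    volume.real (schurPairs a R ∪ schurPairs a B) = volume.real R ^ 2 / (2 * a) := by
  rw [schurPairs_eq_empty ha has hB, union_empty, schurPairs_eq_preimage_shear ha has hsR hR,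
    volume_real_preimage_shear ha.ne', abs_of_pos ha, Measure.volume_eq_prod,
    measureReal_prod_self_inter_fst_le_snd]
  field_simp

end SchurPairs

theorem volume_real_Icc_union_Ioc {a b c d : ℝ} (hab : a ≤ b) (hbc : b ≤ c) (hcd : c ≤ d) :
    volume.real (Icc a b ∪ Ioc c d) = (b - a) + (d - c) := by
  have disjoint : Disjoint (Icc a b) (Ioc c d) :=
    disjoint_left.2 fun _ hx hx' ↦ (hx.2.trans hbc).not_gt hx'.1
  rw [measureReal_union disjoint measurableSet_Ioc measure_Icc_lt_top.ne measure_Ioc_lt_top.ne,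
    Real.volume_real_Icc_of_le hab,
    Real.volume_real_Ioc_of_le hcd]

/-- In region (R₁), i.e. when `as > 1`, the area is
`A(s,t,a) = (s² − 2ts + 2s + t² − 2t + 1)/(2a)`. -/
theorem area_region_R1 (a s t : ℝ) (ha : 0 < a) (hs : 0 ≤ s) (hst : s ≤ t)
    (ht : t ≤ 1) (hC1 : 1 < a * s) :
    areaA a s t = (s ^ 2 - 2 * t * s + 2 * s + t ^ 2 - 2 * t + 1) / (2 * a) := by
  have red_subset : Icc 0 s ∪ Ioc t 1 ⊆ Icc 0 1 :=
    union_subset (Icc_subset_Icc_right (hst.trans ht))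
      (Ioc_subset_Icc_self.trans (Icc_subset_Icc_left (hs.trans hst)))
  calc areaA a s t
      = volume.real (schurPairs a (Icc 0 s ∪ Ioc t 1) ∪ schurPairs a (Ioc s t)) := rfl
    _ = volume.real (Icc 0 s ∪ Ioc t 1) ^ 2 / (2 * a) :=
        area_region_R1_general ha hC1.le subset_union_left red_subset (Ioc_subset_Ioc_right ht)
    _ = (s ^ 2 - 2 * t * s + 2 * s + t ^ 2 - 2 * t + 1) / (2 * a) := by
        rw [volume_real_Icc_union_Ioc hs hst ht]
        ring
end
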